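/- arXiv:1512.00650 — 3 statements merged into one kernel-verified Lean document; each statement's English description precedes it below -/
import Mathlib

section
/- Let Γ ⊆ ℤⁿ be an almost periodic pattern and A ∈ GLₙ(ℝ). Then Â(Γ) = {π(Aγ) : γ ∈ Γ} is an almost periodic pattern. -/
/-!
If `v` is an almost period of `Γ ⊆ ℤⁿ` and `A v` is close to an integer vector `w`, then `w` is an
almost period of the discretized image. Off the symmetric difference of `Γ + v` and `Γ`, which has
small density, and off the set of `z ∈ ℤⁿ` with `π (A (z + v)) ≠ π (A z) + w`, the two sets
`π(A Γ) + w` and `π(A Γ)` agree (`symmDiff_image_subset`, `image_almostPeriod`).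

The defect set is controlled one row `a` of `A` at a time (`row_defect`). If `a` is rational, then
`a ⬝ᵥ v` takes discrete values, so closeness to an integer forces equality and there is no defect.
If some entry `a j` is irrational, a defect at `z` puts `a ⬝ᵥ z` close to a half-integer; the
translates of the set of such `z` by `0, e_j, …, (M - 1) e_j` are pairwise disjoint once closeness
is strict enough, so its density is `O(1 / M)`, uniformly in the position of the ball
(`irrational_row_bad`).

It remains to find a relatively dense set of such `w`. Almost periods with small error are integral, because `Γ`
has positive density (`IsAlmostPeriod.mem_intLat`). The differences of two almost periods are almost
periods with twice the error (`IsAlmostPeriod.sub`), so subtracting from each of them one of finitely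
many representatives with nearly the same image in the torus `ℝⁿ / ℤⁿ` gives what is needed
(`exists_close_periods`).
-/


open MeasureTheory Metric Set Filter

noncomputable def volBall (n : ℕ) (R : ℝ) : ℝ :=
  (volume (Metric.ball (0 : Fin n → ℝ) R)).toReal

noncomputable def DRplus {n : ℕ} (R : ℝ) (Γ Γ' : Set (Fin n → ℝ)) : ℝ :=
  ⨆ x : Fin n → ℝ, (((symmDiff Γ Γ') ∩ Metric.ball x R).ncard : ℝ) / volBall n R

def RelDense {n : ℕ} (N : Set (Fin n → ℝ)) : Prop :=
  ∃ L > (0:ℝ), ∀ x : Fin n → ℝ, ∃ v ∈ N, dist v x < L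

def UnifDiscrete {n : ℕ} (Γ : Set (Fin n → ℝ)) : Prop :=
  ∃ r > (0:ℝ), ∀ x : Fin n → ℝ, (Γ ∩ Metric.ball x r).Subsingleton

def Delone {n : ℕ} (Γ : Set (Fin n → ℝ)) : Prop :=
  UnifDiscrete Γ ∧ RelDense Γ

def transSet {n : ℕ} (Γ : Set (Fin n → ℝ)) (ε R : ℝ) : Set (Fin n → ℝ) :=
  {v | ∀ R' ≥ R, DRplus R' ((· + v) '' Γ) Γ < ε}

def IsAPP {n : ℕ} (Γ : Set (Fin n → ℝ)) : Prop :=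
  Delone Γ ∧ ∀ ε > (0:ℝ), ∃ Rε > (0:ℝ), RelDense (transSet Γ ε Rε)

noncomputable def roundP (x : ℝ) : ℤ := ⌈x - 1/2⌉

noncomputable def roundPi {n : ℕ} (x : Fin n → ℝ) : Fin n → ℝ := fun i => (roundP (x i) : ℝ)

noncomputable def discr {n : ℕ} (A : Matrix (Fin n) (Fin n) ℝ) (x : Fin n → ℝ) :
    Fin n → ℝ :=
  roundPi (A.mulVec x)

def intLat (n : ℕ) : Set (Fin n → ℝ) := {x | ∀ i, ∃ k : ℤ, x i = (k : ℝ)}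

/-! ### Counting in balls and almost periods -/

/-- Pointwise form of the bound `DRplus R' (Γ + v) Γ ≤ ε` for all `R' ≥ R`. -/
def IsAlmostPeriod {n : ℕ} (Γ : Set (Fin n → ℝ)) (ε R : ℝ) (v : Fin n → ℝ) : Prop :=
  ∀ R' ≥ R, ∀ x : Fin n → ℝ,
    ((symmDiff ((· + v) '' Γ) Γ ∩ ball x R').ncard : ℝ) ≤ ε * volBall n R'

lemma volBall_eq (n : ℕ) {R : ℝ} (hR : 0 < R) : volBall n R = (2 * R) ^ n := by
  unfold volBall
  rw [Real.volume_pi_ball _ hR, ENNReal.toReal_ofReal (by positivity), Fintype.card_fin]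

lemma volBall_pos (n : ℕ) {R : ℝ} (hR : 0 < R) : 0 < volBall n R := by
  rw [volBall_eq n hR]; positivity

lemma intLat_ball {n : ℕ} (x : Fin n → ℝ) {R : ℝ} (hR : 0 < R) :
    (intLat n ∩ ball x R).Finite ∧ ((intLat n ∩ ball x R).ncard : ℝ) ≤ (2 * R + 1) ^ n := by
  classical
  set F : Finset (Fin n → ℤ) :=
    Fintype.piFinset (fun i => Finset.Icc ⌈x i - R⌉ ⌊x i + R⌋) with hF
  set f : (Fin n → ℤ) → (Fin n → ℝ) := fun k i => (k i : ℝ)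
  have hsub : intLat n ∩ ball x R ⊆ ((F.image f : Finset (Fin n → ℝ)) : Set (Fin n → ℝ)) := by
    rintro z ⟨hz, hzb⟩
    choose k hk using hz
    rw [mem_ball, dist_pi_lt_iff hR] at hzb
    simp only [Finset.coe_image, Set.mem_image, Finset.mem_coe]
    refine ⟨k, ?_, funext fun i => (hk i).symm⟩
    rw [hF, Fintype.mem_piFinset]
    intro i
    have := hzb i
    rw [Real.dist_eq, abs_lt, hk i] at this
    rw [Finset.mem_Icc, Int.ceil_le, Int.le_floor]
    constructor <;> linarith [this.1, this.2]
  refine ⟨(Finset.finite_toSet _).subset hsub, ?_⟩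
  have h1 : (intLat n ∩ ball x R).ncard ≤ F.card := by
    refine (Set.ncard_le_ncard hsub (Finset.finite_toSet _)).trans ?_
    rw [Set.ncard_coe_finset]
    exact Finset.card_image_le
  have h2 : (F.card : ℝ) ≤ (2 * R + 1) ^ n := by
    rw [hF, Fintype.card_piFinset]
    push_cast
    calc _ ≤ ∏ _i : Fin n, (2 * R + 1) := by
          refine Finset.prod_le_prod (fun _ _ => by positivity) fun i _ => ?_
          rw [Int.card_Icc]
          have ha := Int.floor_le (x i + R)
          have hb := Int.le_ceil (x i - R)
          rcases le_total 0 (⌊x i + R⌋ + 1 - ⌈x i - R⌉) with h | h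
          · have : (((⌊x i + R⌋ + 1 - ⌈x i - R⌉).toNat : ℤ) : ℝ)
                = ((⌊x i + R⌋ + 1 - ⌈x i - R⌉ : ℤ) : ℝ) := by rw [Int.toNat_of_nonneg h]
            rw [Int.cast_natCast] at this
            rw [this]; push_cast; linarith
          · rw [Int.toNat_of_nonpos h]; push_cast; linarith
      _ = _ := by simp
  exact le_trans (by exact_mod_cast h1) h2

lemma ball_inter_translate {n : ℕ} (S : Set (Fin n → ℝ)) (v x : Fin n → ℝ) (R : ℝ) :
    (· + v) '' S ∩ ball x R = (· + v) '' (S ∩ ball (x - v) R) := by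
  ext y
  constructor
  · rintro ⟨⟨z, hz, rfl⟩, hy⟩
    refine ⟨z, ⟨hz, ?_⟩, rfl⟩
    rw [mem_ball, dist_eq_norm] at hy ⊢
    rwa [show z - (x - v) = z + v - x by abel]
  · rintro ⟨z, ⟨hz, hy⟩, rfl⟩
    refine ⟨⟨z, hz, rfl⟩, ?_⟩
    rw [mem_ball, dist_eq_norm] at hy ⊢
    rwa [show z + v - x = z - (x - v) by abel]

lemma symmDiff_finite {n : ℕ} {Γ : Set (Fin n → ℝ)} (hZ : Γ ⊆ intLat n) (v x : Fin n → ℝ)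
    {R : ℝ} (hR : 0 < R) :
    (symmDiff ((· + v) '' Γ) Γ ∩ ball x R).Finite ∧
      ((symmDiff ((· + v) '' Γ) Γ ∩ ball x R).ncard : ℝ) ≤ 2 * (2 * R + 1) ^ n := by
  have hsub : symmDiff ((· + v) '' Γ) Γ ∩ ball x R ⊆
      (· + v) '' (intLat n ∩ ball (x - v) R) ∪ (intLat n ∩ ball x R) := by
    rw [← ball_inter_translate]
    rintro y ⟨hy, hb⟩
    rcases hy with ⟨h, -⟩ | ⟨h, -⟩
    · exact Or.inl ⟨Set.image_mono hZ h, hb⟩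
    · exact Or.inr ⟨hZ h, hb⟩
  obtain ⟨f1, c1⟩ := intLat_ball (x - v) hR
  obtain ⟨f2, c2⟩ := intLat_ball x hR
  have hf := (f1.image (· + v)).union f2
  refine ⟨hf.subset hsub, ?_⟩
  have h1 := (Set.ncard_le_ncard hsub hf).trans (Set.ncard_union_le _ _)
  have h2 := Set.ncard_image_le (f := (· + v)) f1
  have h3 : ((symmDiff ((· + v) '' Γ) Γ ∩ ball x R).ncard : ℝ) ≤
    (intLat n ∩ ball (x - v) R).ncard + (intLat n ∩ ball x R).ncard := by
    exact_mod_cast h1.trans (by omega)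
  linarith

/-- The inclusion `Γ ⊆ ℤⁿ` bounds the family of counts over all centres, so that the supremum
defining `DRplus` is a genuine one (an unbounded supremum would be `0` by convention). -/
lemma isAlmostPeriod_of_mem_transSet {n : ℕ} {Γ : Set (Fin n → ℝ)} (hZ : Γ ⊆ intLat n)
    {ε R : ℝ} (hR : 0 < R) {v : Fin n → ℝ} (hv : v ∈ transSet Γ ε R) :
    IsAlmostPeriod Γ ε R v := by
  intro R' hR' x
  have hpos : 0 < R' := hR.trans_le hR'
  have hvol := volBall_pos n hpos
  have hlt := hv R' hR'
  rw [← div_le_iff₀ hvol]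
  refine le_trans ?_ hlt.le
  unfold DRplus
  refine le_ciSup (f := fun x : Fin n → ℝ =>
    ((symmDiff ((· + v) '' Γ) Γ ∩ ball x R').ncard : ℝ) / volBall n R') ?_ x
  refine ⟨2 * (2 * R' + 1) ^ n / volBall n R', ?_⟩
  rintro _ ⟨y, rfl⟩
  exact div_le_div_of_nonneg_right (symmDiff_finite hZ v y hpos).2 hvol.le

lemma mem_transSet_of_isAlmostPeriod {n : ℕ} {Γ : Set (Fin n → ℝ)}
    {ε ε' R : ℝ} (hε : ε < ε') (hR : 0 < R) {v : Fin n → ℝ}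
    (hv : IsAlmostPeriod Γ ε R v) : v ∈ transSet Γ ε' R := by
  intro R' hR'
  refine lt_of_le_of_lt (ciSup_le fun x => ?_) hε
  rw [div_le_iff₀ (volBall_pos n (hR.trans_le hR'))]
  exact hv R' hR' x

lemma IsAlmostPeriod.sub {n : ℕ} {Γ : Set (Fin n → ℝ)} (hZ : Γ ⊆ intLat n)
    {ε R : ℝ} (hR : 0 < R) {u v : Fin n → ℝ}
    (hv : IsAlmostPeriod Γ ε R v) (hu : IsAlmostPeriod Γ ε R u) :
    IsAlmostPeriod Γ (2 * ε) R (v - u) := by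
  intro R' hR' x
  have hpos : 0 < R' := hR.trans_le hR'
  set S := symmDiff ((· + v) '' Γ) Γ ∩ ball (x + u) R'
  set T := symmDiff ((· + u) '' Γ) Γ ∩ ball (x + u) R'
  have hS := (symmDiff_finite hZ v (x + u) hpos).1
  have hT := (symmDiff_finite hZ u (x + u) hpos).1
  have hmaps : Set.MapsTo (· + u) (symmDiff ((· + (v - u)) '' Γ) Γ ∩ ball x R') (S ∪ T) := by
    rintro y ⟨hy, hb⟩
    have hb' : y + u ∈ ball (x + u) R' := by simpa [mem_ball] using hb
    have e1 : y + u ∈ (· + v) '' Γ ↔ y ∈ (· + (v - u)) '' Γ := by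
      constructor
      · rintro ⟨z, hz, h⟩
        refine ⟨z, hz, ?_⟩
        simp only at h ⊢
        rw [← add_sub_assoc, h]; abel
      · rintro ⟨z, hz, h⟩
        refine ⟨z, hz, ?_⟩
        simp only at h ⊢
        rw [← h]; abel
    have e2 : y + u ∈ (· + u) '' Γ ↔ y ∈ Γ := by
      constructor
      · rintro ⟨z, hz, h⟩
        rwa [← add_right_cancel h]
      · exact fun h => ⟨y, h, rfl⟩
    simp only [S, T, Set.mem_union, Set.mem_inter_iff, Set.mem_symmDiff] at hy ⊢
    rw [e1, e2]
    tauto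
  have h1 := Set.ncard_le_ncard_of_injOn _ hmaps (add_left_injective u).injOn (hS.union hT)
  have h2 := Set.ncard_union_le S T
  have h3 : ((symmDiff ((· + (v - u)) '' Γ) Γ ∩ ball x R').ncard : ℝ) ≤ S.ncard + T.ncard := by
    exact_mod_cast h1.trans h2
  have := hv R' hR' (x + u)
  have := hu R' hR' (x + u)
  linarith

/-! ### Positive density and integrality of almost periods -/

/-- A relatively dense set has positive density along a sequence of radii: distinct boxes of
side `2L` contain distinct points. -/
lemma RelDense.exists_density {n : ℕ} {Γ : Set (Fin n → ℝ)} (hZ : Γ ⊆ intLat n)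
    (hΓ : RelDense Γ) :
    ∃ c > (0:ℝ), ∀ R₀ : ℝ, ∃ R ≥ R₀, ∃ x, c * volBall n R < ((Γ ∩ ball x R).ncard : ℝ) := by
  obtain ⟨L, hL, h⟩ := hΓ
  choose p hp hpd using h
  refine ⟨1 / (2 * (6 * L) ^ n), by positivity, fun R₀ => ?_⟩
  obtain ⟨m, hm⟩ := exists_nat_ge (max 1 (R₀ / (2 * L)))
  have hm1 : (1:ℝ) ≤ m := (le_max_left _ _).trans hm
  have hm2 : R₀ ≤ 2 * L * m := by
    have := (le_max_right _ _).trans hm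
    rw [div_le_iff₀ (by positivity)] at this
    linarith
  set R : ℝ := 2 * L * m + L with hRdef
  have hR : 0 < R := by positivity
  refine ⟨R, by linarith, 0, ?_⟩
  set g : (Fin n → Fin m) → (Fin n → ℝ) := fun k => p (fun i => 2 * L * (k i : ℕ)) with hg
  have hginj : Function.Injective g := by
    intro k l hkl
    funext i
    have d1 := hpd (fun i => 2 * L * ((k i : ℕ) : ℝ))
    have d2 := hpd (fun i => 2 * L * ((l i : ℕ) : ℝ))
    rw [dist_pi_lt_iff hL] at d1 d2
    have a1 := d1 i
    have a2 := d2 i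
    have e : p (fun i => 2 * L * ((k i : ℕ) : ℝ)) = p (fun i => 2 * L * ((l i : ℕ) : ℝ)) := hkl
    rw [e] at a1
    rw [Real.dist_eq, abs_lt] at a1 a2
    have b1 : ((k i : ℕ) : ℝ) < (l i : ℕ) + 1 := by nlinarith [a1.1, a1.2, a2.1, a2.2]
    have b2 : ((l i : ℕ) : ℝ) < (k i : ℕ) + 1 := by nlinarith [a1.1, a1.2, a2.1, a2.2]
    have c1 : (k i : ℕ) < (l i : ℕ) + 1 := by exact_mod_cast b1
    have c2 : (l i : ℕ) < (k i : ℕ) + 1 := by exact_mod_cast b2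
    exact Fin.ext (by omega)
  have hsub : Set.range g ⊆ Γ ∩ ball 0 R := by
    rintro _ ⟨k, rfl⟩
    refine ⟨hp _, ?_⟩
    have d1 := hpd (fun i => 2 * L * ((k i : ℕ) : ℝ))
    rw [dist_pi_lt_iff hL] at d1
    rw [mem_ball, dist_pi_lt_iff hR]
    intro i
    have a1 := d1 i
    rw [Real.dist_eq, abs_lt] at a1
    have : ((k i : ℕ) : ℝ) ≤ m := by exact_mod_cast (k i).2.le
    have : (0:ℝ) ≤ ((k i : ℕ) : ℝ) := by positivity
    rw [Real.dist_eq, abs_lt]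
    simp only [Pi.zero_apply, hg]
    constructor <;> nlinarith [a1.1, a1.2]
  have hfin : (Γ ∩ ball 0 R).Finite :=
    (intLat_ball 0 hR).1.subset (Set.inter_subset_inter_left _ hZ)
  have hcard : m ^ n ≤ (Γ ∩ ball 0 R).ncard := by
    refine le_trans (le_of_eq ?_) (Set.ncard_le_ncard hsub hfin)
    rw [Set.ncard_range_of_injective hginj]
    simp
  have hcard' : (m:ℝ) ^ n ≤ (Γ ∩ ball 0 R).ncard := by exact_mod_cast hcard
  have hmp : (0:ℝ) < (m:ℝ) ^ n := by positivity
  have hv : volBall n R ≤ (6 * L) ^ n * (m:ℝ) ^ n := by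
    rw [volBall_eq n hR, ← mul_pow]
    refine pow_le_pow_left₀ (by positivity) ?_ n
    rw [hRdef]; nlinarith
  calc 1 / (2 * (6 * L) ^ n) * volBall n R
      ≤ 1 / (2 * (6 * L) ^ n) * ((6 * L) ^ n * (m:ℝ) ^ n) := by gcongr
    _ = (m:ℝ) ^ n / 2 := by field_simp
    _ < (m:ℝ) ^ n := by linarith
    _ ≤ _ := hcard'

lemma intLat.add {n : ℕ} {u v : Fin n → ℝ} (hu : u ∈ intLat n) (hv : v ∈ intLat n) :
    u + v ∈ intLat n := by
  intro i
  obtain ⟨a, ha⟩ := hu i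
  obtain ⟨b, hb⟩ := hv i
  exact ⟨a + b, by simp [ha, hb]⟩

lemma intLat.sub {n : ℕ} {u v : Fin n → ℝ} (hu : u ∈ intLat n) (hv : v ∈ intLat n) :
    u - v ∈ intLat n := by
  intro i
  obtain ⟨a, ha⟩ := hu i
  obtain ⟨b, hb⟩ := hv i
  exact ⟨a - b, by simp [ha, hb]⟩

/-- If `v` is not integral then `Γ + v` and `Γ` are disjoint, so their difference is at least as
dense as `Γ`. -/
lemma IsAlmostPeriod.mem_intLat {n : ℕ} {Γ : Set (Fin n → ℝ)} (hZ : Γ ⊆ intLat n)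
    {c ε R : ℝ} (hc : ∀ R₀ : ℝ, ∃ R ≥ R₀, ∃ x, c * volBall n R < ((Γ ∩ ball x R).ncard : ℝ))
    (hR : 0 < R) (hε : ε ≤ c) {v : Fin n → ℝ} (hv : IsAlmostPeriod Γ ε R v) :
    v ∈ intLat n := by
  by_contra hvZ
  obtain ⟨R', hR', x, hx⟩ := hc R
  have hpos : 0 < R' := hR.trans_le hR'
  have hsub : Γ ∩ ball x R' ⊆ symmDiff ((· + v) '' Γ) Γ ∩ ball x R' := by
    rintro y ⟨hy, hb⟩
    refine ⟨Or.inr ⟨hy, ?_⟩, hb⟩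
    rintro ⟨z, hz, h⟩
    apply hvZ
    have : v = y - z := by rw [← h]; simp
    rw [this]
    exact intLat.sub (hZ hy) (hZ hz)
  have h1 : ((Γ ∩ ball x R').ncard : ℝ) ≤ (symmDiff ((· + v) '' Γ) Γ ∩ ball x R').ncard := by
    exact_mod_cast Set.ncard_le_ncard hsub (symmDiff_finite hZ v x hpos).1
  have h2 := hv R' hR' x
  have h3 := mul_le_mul_of_nonneg_right hε (volBall_pos n hpos).le
  linarith

/-! ### Density of the defect of additivity -/

lemma roundP_add_eq {t s η : ℝ} {w : ℤ} (hs : |s - w| < η)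
    (ht : ∀ m : ℤ, η < |t - m - 1/2|) : roundP (t + s) = roundP t + w := by
  unfold roundP
  rw [abs_lt] at hs
  set k := ⌈t - 1/2⌉ with hk
  have h1 : t - 1/2 ≤ k := Int.le_ceil _
  have h2 : (k:ℝ) < t - 1/2 + 1 := Int.ceil_lt_add_one _
  have h3 := ht k
  have h4 := ht (k - 1)
  rw [abs_of_nonpos (by linarith)] at h3
  rw [abs_of_nonneg (by push_cast; linarith)] at h4
  push_cast at h4
  rw [Int.ceil_eq_iff]
  push_cast
  constructor <;> linarith

/-- For a row `a` with an irrational entry `a j`, few integer points `z` have `a ⬝ᵥ z` close to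
a half-integer: if `η` is small, the translates by `0, e_j, …, (M-1) e_j` of the set of such points
are pairwise disjoint, so its density is at most of order `1 / M`. -/
lemma irrational_row_bad {n : ℕ} (a : Fin n → ℝ) (j : Fin n) (hj : Irrational (a j))
    {ε : ℝ} (hε : 0 < ε) :
    ∃ η > (0:ℝ), ∃ R₁ : ℝ, ∀ R ≥ R₁, ∀ x : Fin n → ℝ,
      (({z | z ∈ intLat n ∧ ∃ m : ℤ, |a ⬝ᵥ z - m - 1/2| ≤ η} ∩ ball x R).ncard : ℝ)
        ≤ ε * volBall n R := by
  obtain ⟨M, hM⟩ := exists_nat_ge (max 1 (3 ^ n / ε))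
  have hM1 : (1:ℝ) ≤ M := (le_max_left _ _).trans hM
  have hM2 : 3 ^ n ≤ ε * M := by
    have := (le_max_right _ _).trans hM
    rw [div_le_iff₀ hε] at this
    linarith
  have hη : ∃ η > (0:ℝ), ∀ k : Fin M, (k : ℕ) ≠ 0 → ∀ m : ℤ, 2 * η < |(k : ℕ) * a j - m| := by
    have key : ∀ᶠ η in nhdsWithin (0:ℝ) (Set.Ioi 0),
        ∀ k : Fin M, (k : ℕ) ≠ 0 → ∀ m : ℤ, 2 * η < |(k : ℕ) * a j - m| := by
      rw [eventually_all]
      intro k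
      by_cases hk : (k : ℕ) = 0
      · exact Eventually.of_forall fun _ h => absurd hk h
      have hirr : Irrational ((k : ℕ) * a j) := hj.natCast_mul hk
      have hd : 0 < |(k : ℕ) * a j - round ((k : ℕ) * a j)| :=
        abs_pos.2 (sub_ne_zero.2 (hirr.ne_int _))
      have : ∀ᶠ η in nhdsWithin (0:ℝ) (Set.Ioi 0),
          η < |(k : ℕ) * a j - round ((k : ℕ) * a j)| / 2 :=
        mem_nhdsWithin_of_mem_nhds (Iio_mem_nhds (by positivity))
      filter_upwards [this] with η h _ m
      have := round_le ((k : ℕ) * a j) m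
      linarith
    obtain ⟨η, h1, h2⟩ := (key.and self_mem_nhdsWithin).exists
    exact ⟨η, h2, h1⟩
  obtain ⟨η, hη0, hη⟩ := hη
  refine ⟨η, hη0, M, fun R hR x => ?_⟩
  have hR1 : 1 ≤ R := hM1.trans hR
  have hR0 : 0 < R := by linarith
  set B := {z | z ∈ intLat n ∧ ∃ m : ℤ, |a ⬝ᵥ z - m - 1/2| ≤ η} ∩ ball x R with hB
  have hfin : B.Finite := (intLat_ball x hR0).1.subset fun z hz => ⟨hz.1.1, hz.2⟩
  set G : (Fin n → ℝ) × Fin M → (Fin n → ℝ) := fun q => q.1 + Pi.single j ((q.2 : ℕ) : ℝ) with hG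
  have hmaps : Set.MapsTo G (B ×ˢ Set.univ) (intLat n ∩ ball x (R + M)) := by
    rintro ⟨z, k⟩ ⟨⟨⟨hz, -⟩, hzb⟩, -⟩
    have hk : ((k : ℕ) : ℝ) < M := by exact_mod_cast k.2
    refine ⟨intLat.add hz fun i => ?_, ?_⟩
    · by_cases h : i = j
      · subst h; exact ⟨(k : ℕ), by simp⟩
      · exact ⟨0, by simp [h]⟩
    · rw [mem_ball, dist_eq_norm] at hzb ⊢
      have e : G (z, k) - x = (z - x) + Pi.single j ((k : ℕ) : ℝ) := by
        simp only [hG]; abel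
      have hs : ‖(Pi.single j ((k : ℕ) : ℝ) : Fin n → ℝ)‖ = ((k : ℕ) : ℝ) := by
        rw [Pi.norm_single, Real.norm_natCast]
      have htri := norm_add_le (z - x) (Pi.single j ((k : ℕ) : ℝ) : Fin n → ℝ)
      rw [e]
      linarith
  -- Two bad points differing by a multiple `d < M` of `e_j` must coincide.
  have hsep : ∀ z ∈ B, ∀ z' ∈ B, ∀ k l : Fin M, (l : ℕ) ≤ k →
      z + Pi.single j ((k : ℕ) : ℝ) = z' + Pi.single j ((l : ℕ) : ℝ) → k = l := by
    rintro z ⟨⟨-, m, hm⟩, -⟩ z' ⟨⟨-, m', hm'⟩, -⟩ k l hlk h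
    by_contra hne
    have hd : (k : ℕ) - (l : ℕ) ≠ 0 := fun h0 => hne (Fin.ext (by omega))
    have hdl : (k : ℕ) - (l : ℕ) < M := lt_of_le_of_lt (Nat.sub_le _ _) k.2
    have h' := congrArg (fun y => a ⬝ᵥ y) h
    simp only [dotProduct_add, dotProduct_single] at h'
    have := hη ⟨(k : ℕ) - (l : ℕ), hdl⟩ hd (m' - m)
    simp only [Nat.cast_sub hlk] at this
    refine absurd this (not_lt.2 ?_)
    rw [abs_le] at hm hm' ⊢
    push_cast
    constructor <;> nlinarith [hm.1, hm.2, hm'.1, hm'.2]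
  have hinj : Set.InjOn G (B ×ˢ Set.univ) := by
    rintro ⟨z, k⟩ ⟨hz, -⟩ ⟨z', l⟩ ⟨hz', -⟩ h
    have hkl : k = l := by
      rcases le_total (l : ℕ) (k : ℕ) with hle | hle
      · exact hsep z hz z' hz' k l hle h
      · exact (hsep z' hz' z hz l k hle h.symm).symm
    subst hkl
    have : z = z' := add_right_cancel h
    rw [this]
  obtain ⟨f1, c1⟩ := intLat_ball x (R := R + M) (by linarith)
  have hcard := Set.ncard_le_ncard_of_injOn G hmaps hinj f1
  rw [Set.ncard_prod, Set.ncard_univ, Nat.card_fin] at hcard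
  have hcard' : (B.ncard : ℝ) * M ≤ (2 * (R + M) + 1) ^ n :=
    le_trans (by exact_mod_cast hcard) c1
  have h6 : (2 * (R + M) + 1) ^ n ≤ (3 * (2 * R)) ^ n :=
    pow_le_pow_left₀ (by positivity) (by linarith) n
  rw [mul_pow, ← volBall_eq n hR0] at h6
  have hV := volBall_pos n hR0
  have h7 := mul_le_mul_of_nonneg_right hM2 hV.le
  have h8 : (B.ncard : ℝ) * M ≤ (ε * volBall n R) * M := by linarith
  exact le_of_mul_le_mul_right h8 (by linarith)

/-- A rational row takes discrete values on `ℤⁿ`. -/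
lemma rational_row {n : ℕ} (a : Fin n → ℝ) (ha : ∀ j, ¬ Irrational (a j)) :
    ∃ η > (0:ℝ), ∀ v ∈ intLat n, ∀ w : ℤ, |a ⬝ᵥ v - w| < η → a ⬝ᵥ v = w := by
  have hq : ∀ j, ∃ q : ℚ, (q : ℝ) = a j := fun j => by
    have := ha j; unfold Irrational at this; push Not at this; exact this
  choose q hq using hq
  set D : ℕ := ∏ j, (q j).den with hD
  have hD0 : (0:ℝ) < D := by
    have : 0 < D := Finset.prod_pos fun j _ => (q j).den_pos
    exact_mod_cast this
  refine ⟨1 / D, by positivity, fun v hv w h => ?_⟩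
  choose k hk using hv
  have hint : ∀ j, ∃ b : ℤ, (D : ℝ) * a j = b := fun j => by
    obtain ⟨e, he⟩ : (q j).den ∣ D := Finset.dvd_prod_of_mem _ (Finset.mem_univ j)
    refine ⟨e * (q j).num, ?_⟩
    have : ((q j).den : ℝ) * a j = (q j).num := by
      rw [← hq j]
      exact_mod_cast Rat.den_mul_eq_num (q j)
    rw [he]; push_cast; rw [← this]; ring
  choose b hb using hint
  have hN : (D : ℝ) * (a ⬝ᵥ v - w) = ((∑ j, b j * k j - D * w : ℤ) : ℝ) := by
    push_cast
    rw [mul_sub, dotProduct, Finset.mul_sum]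
    congr 1
    refine Finset.sum_congr rfl fun j _ => ?_
    rw [← mul_assoc, hb, hk]
  have hlt : |((∑ j, b j * k j - D * w : ℤ) : ℝ)| < 1 := by
    rw [← hN, abs_mul, abs_of_pos hD0]
    rw [lt_div_iff₀ hD0] at h
    linarith
  have h0 : (∑ j, b j * k j - D * w : ℤ) = 0 := by
    rw [← Int.abs_lt_one_iff]; exact_mod_cast hlt
  rw [h0, Int.cast_zero] at hN
  have := (mul_eq_zero.1 hN).resolve_left hD0.ne'
  linarith

/-- One coordinate of the defect of additivity of the discretization: if `a ⬝ᵥ v` is close to the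
integer `w`, then rounding fails to commute with the translation by `v` only on a set of small
density. -/
lemma row_defect {n : ℕ} (a : Fin n → ℝ) {ε : ℝ} (hε : 0 < ε) :
    ∃ η > (0:ℝ), ∃ R₁ : ℝ, ∀ v ∈ intLat n, ∀ w : ℤ, |a ⬝ᵥ v - w| < η →
      ∀ R ≥ R₁, 0 < R → ∀ x : Fin n → ℝ,
      (({z | z ∈ intLat n ∧ roundP (a ⬝ᵥ z + a ⬝ᵥ v) ≠ roundP (a ⬝ᵥ z) + w} ∩ ball x R).ncard : ℝ)
        ≤ ε * volBall n R := by
  by_cases h : ∃ j, Irrational (a j)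
  · obtain ⟨j, hj⟩ := h
    obtain ⟨η, hη, R₁, H⟩ := irrational_row_bad a j hj hε
    refine ⟨η, hη, R₁, fun v _ w hvw R hR hR0 x => le_trans ?_ (H R hR x)⟩
    have hsub : {z | z ∈ intLat n ∧ roundP (a ⬝ᵥ z + a ⬝ᵥ v) ≠ roundP (a ⬝ᵥ z) + w} ∩ ball x R ⊆
        {z | z ∈ intLat n ∧ ∃ m : ℤ, |a ⬝ᵥ z - m - 1/2| ≤ η} ∩ ball x R := by
      rintro z ⟨⟨hz, hne⟩, hb⟩
      refine ⟨⟨hz, ?_⟩, hb⟩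
      by_contra hcon
      push Not at hcon
      exact hne (roundP_add_eq hvw hcon)
    exact_mod_cast Set.ncard_le_ncard hsub
      ((intLat_ball x hR0).1.subset fun z hz => ⟨hz.1.1, hz.2⟩)
  · push Not at h
    obtain ⟨η, hη, H⟩ := rational_row a h
    refine ⟨η, hη, 0, fun v hv w hvw R _ hR0 x => ?_⟩
    have hempty : {z | z ∈ intLat n ∧ roundP (a ⬝ᵥ z + a ⬝ᵥ v) ≠ roundP (a ⬝ᵥ z) + w} = ∅ := by
      ext z
      simp only [Set.mem_ofPred_eq, Set.mem_empty_iff_false, iff_false, not_and, not_not]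
      intro _
      rw [H v hv w hvw]
      unfold roundP
      rw [← Int.ceil_add_intCast]
      congr 1; ring
    rw [hempty, Set.empty_inter, Set.ncard_empty, Nat.cast_zero]
    exact mul_nonneg hε.le (volBall_pos n hR0).le

/-- The integer points at which `discr A` fails to commute with the translations by `v` in the
source and `w` in the target. -/
def defectSet {n : ℕ} (A : Matrix (Fin n) (Fin n) ℝ) (v w : Fin n → ℝ) : Set (Fin n → ℝ) :=
  {z | z ∈ intLat n ∧ discr A (z + v) ≠ discr A z + w}

lemma defect_count {n : ℕ} (A : Matrix (Fin n) (Fin n) ℝ) {ε : ℝ} (hε : 0 < ε) :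
    ∃ η > (0:ℝ), ∃ R₁ : ℝ, ∀ v ∈ intLat n, ∀ w ∈ intLat n,
      (∀ i, |A.mulVec v i - w i| < η) → ∀ R ≥ R₁, 0 < R → ∀ x : Fin n → ℝ,
        ((defectSet A v w ∩ ball x R).ncard : ℝ) ≤ n * ε * volBall n R := by
  choose η hη R₁ H using fun i => row_defect (A i) hε
  obtain ⟨η₀, hη₁, hη₀⟩ : ∃ η₀ : ℝ, (∀ i, η₀ < η i) ∧ 0 < η₀ := by
    have key : ∀ᶠ η₀ in nhdsWithin (0:ℝ) (Set.Ioi 0), ∀ i, η₀ < η i := by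
      rw [eventually_all]
      exact fun i => mem_nhdsWithin_of_mem_nhds (Iio_mem_nhds (hη i))
    exact (key.and self_mem_nhdsWithin).exists
  obtain ⟨R₀, hR₀⟩ := (Set.finite_range R₁).bddAbove
  refine ⟨η₀, hη₀, R₀, fun v hv w hw hvw R hR hpos x => ?_⟩
  choose k hk using hw
  set E : Fin n → Set (Fin n → ℝ) := fun i =>
    {z | z ∈ intLat n ∧ roundP (A i ⬝ᵥ z + A i ⬝ᵥ v) ≠ roundP (A i ⬝ᵥ z) + k i} ∩ ball x R
  have hfin : ∀ i, (E i).Finite := fun i =>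
    (intLat_ball x hpos).1.subset fun z hz => ⟨hz.1.1, hz.2⟩
  have hsub : defectSet A v w ∩ ball x R ⊆ ⋃ i, E i := by
    rintro z ⟨⟨hz, hne⟩, hb⟩
    obtain ⟨i, hi⟩ := Function.ne_iff.1 hne
    refine Set.mem_iUnion.2 ⟨i, ⟨hz, fun h => hi ?_⟩, hb⟩
    simp only [discr, roundPi, Matrix.mulVec_add, Pi.add_apply, hk i]
    rw [← Int.cast_add, Int.cast_inj]
    exact h
  have h1 := Set.ncard_le_ncard hsub (Set.finite_iUnion hfin)
  have h2 : (⋃ i, E i).ncard ≤ ∑ i, (E i).ncard := Set.ncard_iUnion_le_of_fintype E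
  have h3 : ((defectSet A v w ∩ ball x R).ncard : ℝ) ≤ ∑ i, ((E i).ncard : ℝ) := by
    exact_mod_cast h1.trans h2
  refine h3.trans ((Finset.sum_le_sum fun i _ => H i v hv (k i) ?_ R ?_ hpos x).trans ?_)
  · have := hvw i
    rw [hk i] at this
    exact this.trans (hη₁ i)
  · exact (hR₀ ⟨i, rfl⟩).trans hR
  · simp [mul_assoc]

/-! ### Linear maps, rounding, and the pigeonhole argument -/

lemma mulVec_bound {n : ℕ} (M : Matrix (Fin n) (Fin n) ℝ) :
    ∃ K ≥ (1:ℝ), ∀ x y, dist (M.mulVec x) (M.mulVec y) ≤ K * dist x y := by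
  refine ⟨max 1 ‖M.mulVecLin.toContinuousLinearMap‖, le_max_left _ _, fun x y => ?_⟩
  have := M.mulVecLin.toContinuousLinearMap.le_opNorm (x - y)
  rw [dist_eq_norm, dist_eq_norm, ← Matrix.mulVec_sub]
  refine le_trans this ?_
  gcongr
  exact le_max_right _ _

lemma dist_roundPi {n : ℕ} (x : Fin n → ℝ) : dist (roundPi x) x ≤ 1 / 2 := by
  rw [dist_pi_le_iff (by norm_num)]
  intro i
  have h1 := Int.le_ceil (x i - 1/2)
  have h2 := Int.ceil_lt_add_one (x i - 1/2)
  rw [Real.dist_eq, abs_le]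
  unfold roundPi roundP
  constructor <;> linarith

lemma discr_mem_intLat {n : ℕ} (A : Matrix (Fin n) (Fin n) ℝ) (x : Fin n → ℝ) :
    discr A x ∈ intLat n := fun i => ⟨roundP (A.mulVec x i), rfl⟩

lemma unifDiscrete_of_subset_intLat {n : ℕ} {S : Set (Fin n → ℝ)} (hS : S ⊆ intLat n) :
    UnifDiscrete S := by
  refine ⟨1 / 2, by norm_num, fun x y hy z hz => ?_⟩
  funext i
  obtain ⟨k, hk⟩ := hS hy.1 i
  obtain ⟨l, hl⟩ := hS hz.1 i
  have h1 := (dist_pi_lt_iff (by norm_num)).1 (mem_ball.1 hy.2) i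
  have h2 := (dist_pi_lt_iff (by norm_num)).1 (mem_ball.1 hz.2) i
  rw [Real.dist_eq, abs_lt] at h1 h2
  rw [hk] at h1 ⊢
  rw [hl] at h2 ⊢
  have a1 : (k:ℝ) < l + 1 := by linarith [h1.1, h1.2, h2.1, h2.2]
  have a2 : (l:ℝ) < k + 1 := by linarith [h1.1, h1.2, h2.1, h2.2]
  have b1 : k < l + 1 := by exact_mod_cast a1
  have b2 : l < k + 1 := by exact_mod_cast a2
  rw [show k = l by omega]

/-- The pigeonhole step: subtracting finitely many representatives `u ∈ N` of the approximate
classes of `A v` modulo `ℤⁿ` moves `A (v - u)` within `η` of an integer vector `w`; since only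
finitely many `u` occur, the vectors `w` are again relatively dense. -/
lemma exists_close_periods {n : ℕ} {N : Set (Fin n → ℝ)} (hN : RelDense N)
    (A B : Matrix (Fin n) (Fin n) ℝ) (hAB : A * B = 1) {η : ℝ} (hη : 0 < η) :
    RelDense {w | w ∈ intLat n ∧ ∃ v ∈ N, ∃ u ∈ N, ∀ i, |A.mulVec (v - u) i - w i| < η} := by
  obtain ⟨L, hL, hdense⟩ := hN
  obtain ⟨K, hK, hKd⟩ := mulVec_bound A
  set f : (Fin n → ℝ) → (Fin n → ℝ) := fun v i => Int.fract (A.mulVec v i) with hf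
  have htb : TotallyBounded (f '' N) := by
    refine ((isCompact_closedBall (0 : Fin n → ℝ) 1).totallyBounded).subset ?_
    rintro _ ⟨v, -, rfl⟩
    rw [mem_closedBall, dist_pi_le_iff zero_le_one]
    intro i
    have h1 := Int.fract_nonneg (A.mulVec v i)
    have h2 := Int.fract_lt_one (A.mulVec v i)
    rw [Real.dist_eq, abs_le]
    simp only [hf, Pi.zero_apply]
    constructor <;> linarith
  obtain ⟨t, ht, htf, hcov⟩ := Metric.finite_approx_of_totallyBounded htb η hη
  have hex : ∀ y : t, ∃ u ∈ N, f u = y := fun y => ht y.2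
  choose g hgN hg using hex
  have : Finite t := htf
  obtain ⟨C, hC⟩ := (Set.finite_range fun y : t => ‖g y‖).bddAbove
  have hC' : ∀ y, ‖g y‖ ≤ max C 0 := fun y => (hC ⟨y, rfl⟩).trans (le_max_left _ _)
  refine ⟨η + K * (L + max C 0), by positivity, fun y => ?_⟩
  obtain ⟨v, hv, hvd⟩ := hdense (B.mulVec y)
  obtain ⟨c, hc, hcd⟩ := Set.mem_iUnion₂.1 (hcov ⟨v, hv, rfl⟩)
  set u := g ⟨c, hc⟩ with hu
  have hfu : f u = c := hg ⟨c, hc⟩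
  rw [mem_ball, dist_pi_lt_iff hη, ← hfu] at hcd
  set w : Fin n → ℝ := fun i => ((⌊A.mulVec v i⌋ - ⌊A.mulVec u i⌋ : ℤ) : ℝ) with hw
  have hclose : ∀ i, |A.mulVec (v - u) i - w i| < η := by
    intro i
    have := hcd i
    rw [Real.dist_eq] at this
    simp only [hf, Int.fract] at this
    rw [Matrix.mulVec_sub, Pi.sub_apply, hw]
    push_cast
    convert this using 2
    ring
  refine ⟨w, ⟨fun i => ⟨_, rfl⟩, v, hv, u, hgN _, hclose⟩, ?_⟩
  have d1 : dist w (A.mulVec (v - u)) < η := by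
    rw [dist_pi_lt_iff hη]
    intro i
    rw [dist_comm, Real.dist_eq]
    exact hclose i
  have d2 : dist (A.mulVec (v - u)) y ≤ K * (L + max C 0) := by
    have e : y = A.mulVec (B.mulVec y) := by rw [Matrix.mulVec_mulVec, hAB, Matrix.one_mulVec]
    rw [e]
    refine (hKd _ _).trans ?_
    gcongr
    calc dist (v - u) (B.mulVec y) ≤ dist (v - u) v + dist v (B.mulVec y) := dist_triangle _ _ _
      _ ≤ L + max C 0 := by
        have : dist (v - u) v = ‖u‖ := by rw [dist_eq_norm]; simp
        rw [this]
        linarith [hC' ⟨c, hc⟩]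
  linarith [dist_triangle w (A.mulVec (v - u)) y]

/-! ### Almost periods of the image -/

lemma ncard_discr_image {n : ℕ} (A B : Matrix (Fin n) (Fin n) ℝ) (hBA : B * A = 1) {K : ℝ}
    (hK : 1 ≤ K) (hKd : ∀ x y, dist (B.mulVec x) (B.mulVec y) ≤ K * dist x y)
    (S : Set (Fin n → ℝ)) (x : Fin n → ℝ) {R : ℝ}
    (hfin : (S ∩ ball (B.mulVec x) (K * (R + 1))).Finite) :
    (discr A '' S ∩ ball x R).Finite ∧
      (discr A '' S ∩ ball x R).ncard ≤ (S ∩ ball (B.mulVec x) (K * (R + 1))).ncard := by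
  have hsub : discr A '' S ∩ ball x R ⊆ discr A '' (S ∩ ball (B.mulVec x) (K * (R + 1))) := by
    rintro _ ⟨⟨z, hz, rfl⟩, hb⟩
    refine ⟨z, ⟨hz, ?_⟩, rfl⟩
    rw [mem_ball] at hb ⊢
    have e : z = B.mulVec (A.mulVec z) := by rw [Matrix.mulVec_mulVec, hBA, Matrix.one_mulVec]
    have h1 : dist (discr A z) (A.mulVec z) ≤ 1 / 2 := dist_roundPi _
    have h2 : dist (A.mulVec z) x < R + 1 := by
      have := dist_triangle_left (A.mulVec z) x (discr A z)
      linarith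
    calc dist z (B.mulVec x) = dist (B.mulVec (A.mulVec z)) (B.mulVec x) := by rw [← e]
      _ ≤ K * dist (A.mulVec z) x := hKd _ _
      _ < K * (R + 1) := by gcongr
  exact ⟨(hfin.image _).subset hsub,
    (Set.ncard_le_ncard hsub (hfin.image _)).trans (Set.ncard_image_le hfin)⟩

/-- Write `E` for `defectSet A v w`. A point of one of `discr A '' Γ + w` and `discr A '' Γ` that is
missing from the other comes from a point where `Γ + v` and `Γ` differ, or from `E`, or from
`E + v`. -/
lemma symmDiff_image_subset {n : ℕ} {Γ : Set (Fin n → ℝ)} (hZ : Γ ⊆ intLat n)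
    (A : Matrix (Fin n) (Fin n) ℝ) (v w : Fin n → ℝ) :
    symmDiff ((· + w) '' (discr A '' Γ)) (discr A '' Γ) ⊆
      discr A '' (symmDiff ((· + v) '' Γ) Γ) ∪
        ((· + w) '' (discr A '' defectSet A v w) ∪ discr A '' ((· + v) '' defectSet A v w)) := by
  rintro y (⟨⟨_, ⟨z, hz, rfl⟩, rfl⟩, hy⟩ | ⟨⟨z, hz, rfl⟩, hy⟩)
  · by_cases h : z ∈ defectSet A v w
    · exact Or.inr (Or.inl ⟨_, ⟨z, h, rfl⟩, rfl⟩)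
    · have he : discr A (z + v) = discr A z + w := by
        by_contra hne; exact h ⟨hZ hz, hne⟩
      refine Or.inl ⟨z + v, Or.inl ⟨⟨z, hz, rfl⟩, fun hzv => hy ⟨z + v, hzv, he⟩⟩, he⟩
  · by_cases h : z ∈ (· + v) '' Γ
    · obtain ⟨z', hz', rfl⟩ := h
      refine Or.inr (Or.inr ⟨z' + v, ⟨z', ⟨hZ hz', fun he => hy ?_⟩, rfl⟩, rfl⟩)
      exact ⟨_, ⟨z', hz', rfl⟩, he.symm⟩
    · exact Or.inl ⟨z, Or.inr ⟨hz, h⟩, rfl⟩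

lemma image_almostPeriod {n : ℕ} {Γ : Set (Fin n → ℝ)} (hZ : Γ ⊆ intLat n)
    (A B : Matrix (Fin n) (Fin n) ℝ) (hBA : B * A = 1) {K : ℝ}
    (hK : 1 ≤ K) (hKd : ∀ x y, dist (B.mulVec x) (B.mulVec y) ≤ K * dist x y)
    {α β R₀ : ℝ} (hα : 0 ≤ α) (hβ : 0 ≤ β) (hR₀ : 1 ≤ R₀) {v w : Fin n → ℝ}
    (hv : IsAlmostPeriod Γ α R₀ v)
    (hw : ∀ R ≥ R₀, ∀ x, ((defectSet A v w ∩ ball x R).ncard : ℝ) ≤ β * volBall n R) :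
    IsAlmostPeriod (discr A '' Γ) ((α + 2 * β) * (2 * K) ^ n) R₀ w := by
  intro R hR x
  have hR1 : 1 ≤ R := hR₀.trans hR
  have hR0 : 0 < R := by linarith
  have hK0 : 0 < K := by linarith
  set R' := K * (R + 1) with hR'def
  have hR'R : R ≤ R' := by nlinarith
  have hR'0 : 0 < R' := by linarith
  set E := defectSet A v w with hE
  have hEfin : ∀ y, (E ∩ ball y R').Finite := fun y =>
    (intLat_ball y hR'0).1.subset fun z hz => ⟨hz.1.1, hz.2⟩
  obtain ⟨f1, c1⟩ := ncard_discr_image A B hBA hK hKd (symmDiff ((· + v) '' Γ) Γ) x (R := R)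
    (symmDiff_finite hZ v _ hR'0).1
  obtain ⟨f2, c2⟩ := ncard_discr_image A B hBA hK hKd E (x - w) (R := R) (hEfin _)
  have hEv := ball_inter_translate E v (B.mulVec x) R'
  obtain ⟨f3, c3⟩ := ncard_discr_image A B hBA hK hKd ((· + v) '' E) x (R := R)
    (by rw [hEv]; exact (hEfin _).image _)
  have c3' : (discr A '' ((· + v) '' E) ∩ ball x R).ncard ≤
      (E ∩ ball (B.mulVec x - v) R').ncard := by
    refine c3.trans ?_
    rw [← hR'def, hEv]
    exact Set.ncard_image_le (hEfin _)
  have f2' : ((· + w) '' (discr A '' E) ∩ ball x R).Finite := by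
    rw [ball_inter_translate]; exact f2.image _
  have c2' : ((· + w) '' (discr A '' E) ∩ ball x R).ncard ≤
      (E ∩ ball (B.mulVec (x - w)) R').ncard := by
    rw [ball_inter_translate]
    exact (Set.ncard_image_le f2).trans c2
  have hsub := Set.inter_subset_inter_left (ball x R) (symmDiff_image_subset hZ A v w)
  rw [Set.union_inter_distrib_right, Set.union_inter_distrib_right, ← hE] at hsub
  rw [← hR'def] at c1 c2
  have h1 := Set.ncard_le_ncard hsub (f1.union (f2'.union f3))
  have h2 := Set.ncard_union_le (discr A '' (symmDiff ((· + v) '' Γ) Γ) ∩ ball x R)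
    ((· + w) '' (discr A '' E) ∩ ball x R ∪ discr A '' ((· + v) '' E) ∩ ball x R)
  have h3 := Set.ncard_union_le ((· + w) '' (discr A '' E) ∩ ball x R)
    (discr A '' ((· + v) '' E) ∩ ball x R)
  have h4 : ((symmDiff ((· + w) '' (discr A '' Γ)) (discr A '' Γ) ∩ ball x R).ncard : ℝ) ≤
      (symmDiff ((· + v) '' Γ) Γ ∩ ball (B.mulVec x) R').ncard +
      ((E ∩ ball (B.mulVec (x - w)) R').ncard + (E ∩ ball (B.mulVec x - v) R').ncard) := by
    have : (symmDiff ((· + w) '' (discr A '' Γ)) (discr A '' Γ) ∩ ball x R).ncard ≤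
      (symmDiff ((· + v) '' Γ) Γ ∩ ball (B.mulVec x) R').ncard +
      ((E ∩ ball (B.mulVec (x - w)) R').ncard + (E ∩ ball (B.mulVec x - v) R').ncard) := by
      omega
    exact_mod_cast this
  have b1 := hv R' (hR.trans hR'R) (B.mulVec x)
  have b2 := hw R' (hR.trans hR'R) (B.mulVec (x - w))
  have b3 := hw R' (hR.trans hR'R) (B.mulVec x - v)
  have hvol : volBall n R' ≤ (2 * K) ^ n * volBall n R := by
    rw [volBall_eq n hR0, volBall_eq n hR'0, ← mul_pow]
    refine pow_le_pow_left₀ (by positivity) ?_ n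
    rw [hR'def]; nlinarith
  have h5 := mul_le_mul_of_nonneg_left hvol (show 0 ≤ α + 2 * β by positivity)
  linarith

theorem stmt9 {n : ℕ} (Γ : Set (Fin n → ℝ)) (hZ : Γ ⊆ intLat n) (hΓ : IsAPP Γ)
    (A : Matrix (Fin n) (Fin n) ℝ) (hA : IsUnit A.det) :
    IsAPP (discr A '' Γ) := by
  obtain ⟨⟨-, hdense⟩, hper⟩ := hΓ
  have hAB : A * A⁻¹ = 1 := Matrix.mul_nonsing_inv A hA
  have hBA : A⁻¹ * A = 1 := Matrix.nonsing_inv_mul A hA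
  refine ⟨⟨unifDiscrete_of_subset_intLat ?_, ?_⟩, fun ε hε => ?_⟩
  · rintro _ ⟨z, -, rfl⟩
    exact discr_mem_intLat A z
  · obtain ⟨L, hL, h⟩ := hdense
    obtain ⟨K, hK, hKd⟩ := mulVec_bound A
    refine ⟨K * L + 1, by positivity, fun y => ?_⟩
    obtain ⟨z, hz, hzd⟩ := h (A⁻¹.mulVec y)
    refine ⟨discr A z, ⟨z, hz, rfl⟩, ?_⟩
    have e : A.mulVec (A⁻¹.mulVec y) = y := by
      rw [Matrix.mulVec_mulVec, hAB, Matrix.one_mulVec]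
    have h1 : dist (discr A z) (A.mulVec z) ≤ 1 / 2 := dist_roundPi _
    have h2 := hKd z (A⁻¹.mulVec y)
    rw [e] at h2
    have h3 : K * dist z (A⁻¹.mulVec y) ≤ K * L := by gcongr
    linarith [dist_triangle (discr A z) (A.mulVec z) y]
  obtain ⟨K, hK, hKd⟩ := mulVec_bound A⁻¹
  obtain ⟨c, hc, hcd⟩ := hdense.exists_density hZ
  have hK0 : 0 < K := by linarith
  -- `τ` is chosen so that the final density `(2τ + 2nτ) (2K)ⁿ` equals `ε / 2`.
  set τ : ℝ := ε / (4 * (n + 1) * (2 * K) ^ n) with hτ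
  have hτ0 : 0 < τ := by positivity
  obtain ⟨R₁, hR₁, hN⟩ := hper (min τ c) (lt_min hτ0 hc)
  obtain ⟨η, hη, R₂, hdef⟩ := defect_count A hτ0
  set R₀ := max 1 (max R₁ R₂) with hR₀
  have hR01 : R₁ ≤ R₀ := (le_max_left _ _).trans (le_max_right _ _)
  have hR02 : R₂ ≤ R₀ := (le_max_right _ _).trans (le_max_right _ _)
  have hR0one : 1 ≤ R₀ := le_max_left _ _
  have hR0pos : 0 < R₀ := by linarith
  refine ⟨R₀, hR0pos, ?_⟩
  obtain ⟨L, hL, hw⟩ := exists_close_periods hN A A⁻¹ hAB hη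
  refine ⟨L, hL, fun y => ?_⟩
  obtain ⟨w, ⟨hwZ, v, hv, u, hu, hclose⟩, hwy⟩ := hw y
  refine ⟨w, ?_, hwy⟩
  have pv := isAlmostPeriod_of_mem_transSet hZ hR₁ hv
  have pu := isAlmostPeriod_of_mem_transSet hZ hR₁ hu
  have vZ := pv.mem_intLat hZ hcd hR₁ (min_le_right _ _)
  have uZ := pu.mem_intLat hZ hcd hR₁ (min_le_right _ _)
  have pvu : IsAlmostPeriod Γ (2 * τ) R₀ (v - u) := by
    intro R hR x
    refine (pv.sub hZ hR₁ pu R (hR01.trans hR) x).trans ?_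
    have := (volBall_pos n (hR0pos.trans_le hR)).le
    gcongr
    exact min_le_left _ _
  have himg := image_almostPeriod hZ A A⁻¹ hBA hK hKd (by positivity : 0 ≤ 2 * τ)
    (by positivity : 0 ≤ n * τ) hR0one pvu
    (fun R hR x => hdef (v - u) (intLat.sub vZ uZ) w hwZ hclose R (hR02.trans hR)
      (hR0pos.trans_le hR) x)
  refine mem_transSet_of_isAlmostPeriod ?_ hR0pos himg
  have : (2 * τ + 2 * (n * τ)) * (2 * K) ^ n = ε / 2 := by
    rw [hτ]; field_simp; ring
  rw [this]; linarith
end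

section
/- Let Γ ⊆ ℝⁿ be an almost periodic pattern. For every ε > 0, the set N_ε = ⋃_{R'>0} {v ∈ ℝⁿ : ∀R ≥ R', D_R⁺((Γ+v) Δ Γ) < ε} of ε-translations of Γ contains a relatively dense almost periodic pattern. -/
/-!
Write `d(v)` for the asymptotic uniform density of `(Γ + v) ∆ Γ`; this is a translation invariant
pseudo-norm on `ℝⁿ`, and `N_s = NEps Γ s` is essentially its ball of radius `s`. The theorem holds
with `P = N_t` for all but countably many small `t > 0`.

* For small `s` the set `N_s` is uniformly discrete. If `v ≠ 0` is shorter than the discreteness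
  radius of `Γ`, then `Γ + v` and `Γ` are disjoint, so `d(v)` is at least the density of `Γ`, which
  is positive; and differences of elements of `N_{s/2}` lie in `N_s` (`unifDiscrete_NEps`).
* If `w ∈ N_δ`, then `(N_t + w) ∆ N_t` lies in the annulus `A(t, δ) = N_{t+δ} \ N_{t-δ}`
  (`symmDiff_subset_annulus`). So `N_t` is an almost periodic pattern as soon as the uniform upper
  density of `A(t, δ)` tends to `0` with `δ`.
* Call `t` *`c`-thick* if that upper density is at least `c` for every `δ`. Since
  `A(t, δ) + N_δ ⊆ A(t, 2δ)` and `N_δ` is relatively dense, a single large ball in which `A(t, δ)`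
  has density `c` can be copied all over space, so that `A(t, 2δ)` has *lower* density at least
  `c / 4ⁿ`, whatever `δ` is. For finitely many distinct thick `t` and small `δ` these annuli are
  disjoint subsets of one uniformly discrete set, whose density is finite. Hence for each `c` there are only finitely
  many `c`-thick values (`finite_thick`), and only countably many `t` are thick for some `c`.
-/

open MeasureTheory Metric Set Filter

def NEps {n : ℕ} (Γ : Set (Fin n → ℝ)) (ε : ℝ) : Set (Fin n → ℝ) :=
  {v | ∃ R' > (0:ℝ), ∀ R ≥ R', DRplus R ((· + v) '' Γ) Γ < ε}

lemma volBall_nonneg (n : ℕ) (R : ℝ) : 0 ≤ volBall n R := ENNReal.toReal_nonneg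

lemma volBall_two_mul (n : ℕ) {R : ℝ} (hR : 0 < R) :
    volBall n (2 * R) = 2 ^ n * volBall n R := by
  rw [volBall_eq n hR, volBall_eq n (by positivity), mul_pow 2 (2 * R)]

lemma volBall_mono (n : ℕ) {R S : ℝ} (hR : 0 < R) (h : R ≤ S) : volBall n R ≤ volBall n S := by
  rw [volBall_eq n hR, volBall_eq n (hR.trans_le h)]
  gcongr

lemma volume_ball_eq {n : ℕ} (x : Fin n → ℝ) (R : ℝ) :
    volume (ball x R) = ENNReal.ofReal (volBall n R) := by
  unfold volBall
  rw [ENNReal.ofReal_toReal measure_ball_lt_top.ne, Measure.addHaar_ball_center]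

/-- Packing bound: the balls of radius `r` around the points of a set that is `r`-discrete in the
sense of `UnifDiscrete` are pairwise disjoint. -/
lemma card_mul_volBall_le {n : ℕ} {Γ : Set (Fin n → ℝ)} {r : ℝ}
    (hΓ : ∀ x : Fin n → ℝ, (Γ ∩ ball x r).Subsingleton) (x : Fin n → ℝ) (R : ℝ)
    (F : Finset (Fin n → ℝ)) (hF : (F : Set (Fin n → ℝ)) ⊆ Γ ∩ ball x R) :
    (F.card : ℝ) * volBall n r ≤ volBall n (R + r) := by
  have hdisj : Set.PairwiseDisjoint (F : Set (Fin n → ℝ)) (fun a => ball a r) := by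
    intro a ha b hb hab
    refine Set.disjoint_left.2 fun y hya hyb => hab ?_
    exact hΓ y ⟨(hF ha).1, mem_ball_comm.1 hya⟩ ⟨(hF hb).1, mem_ball_comm.1 hyb⟩
  have h1 : volume (⋃ a ∈ F, ball a r) ≤ volume (ball x (R + r)) := by
    refine measure_mono (iUnion₂_subset fun a ha => ball_subset_ball' ?_)
    have := mem_ball.1 (hF ha).2
    linarith
  rw [measure_biUnion_finset hdisj (fun _ _ => measurableSet_ball)] at h1
  simp only [volume_ball_eq, Finset.sum_const, nsmul_eq_mul] at h1
  rw [← ENNReal.ofReal_natCast, ← ENNReal.ofReal_mul (by positivity),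
    ENNReal.ofReal_le_ofReal_iff (volBall_nonneg _ _)] at h1
  exact h1

lemma UnifDiscrete.finite_inter_ball {n : ℕ} {Γ : Set (Fin n → ℝ)} (hΓ : UnifDiscrete Γ)
    (x : Fin n → ℝ) (R : ℝ) : (Γ ∩ ball x R).Finite := by
  obtain ⟨r, hr, h⟩ := hΓ
  by_contra hinf
  obtain ⟨k, hk⟩ := exists_nat_gt (volBall n (R + r) / volBall n r)
  obtain ⟨F, hF, hcard⟩ := Set.Infinite.exists_subset_card_eq hinf k
  have := card_mul_volBall_le h x R F hF
  rw [div_lt_iff₀ (volBall_pos n hr)] at hk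
  rw [hcard] at this
  linarith

lemma UnifDiscrete.exists_ncard_le {n : ℕ} {Γ : Set (Fin n → ℝ)} (hΓ : UnifDiscrete Γ)
    (R : ℝ) : ∃ C : ℝ, ∀ x, ((Γ ∩ ball x R).ncard : ℝ) ≤ C := by
  have hfin := hΓ.finite_inter_ball
  obtain ⟨r, hr, h⟩ := hΓ
  refine ⟨volBall n (R + r) / volBall n r, fun x => ?_⟩
  have := card_mul_volBall_le h x R (hfin x R).toFinset (by simp)
  rw [le_div_iff₀ (volBall_pos n hr), Set.ncard_eq_toFinset_card _ (hfin x R)]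
  exact this

/-- A uniformly discrete set has finite uniform upper density. -/
lemma UnifDiscrete.exists_density_le {n : ℕ} {Γ : Set (Fin n → ℝ)} (hΓ : UnifDiscrete Γ) :
    ∃ K > 0, ∃ R₀ > 0, ∀ R ≥ R₀, ∀ x, ((Γ ∩ ball x R).ncard : ℝ) ≤ K * volBall n R := by
  have hfin := hΓ.finite_inter_ball
  obtain ⟨r, hr, h⟩ := hΓ
  refine ⟨2 ^ n / volBall n r, div_pos (by positivity) (volBall_pos n hr), r, hr,
    fun R hR x => ?_⟩
  have h1 := card_mul_volBall_le h x R (hfin x R).toFinset (by simp)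
  have h2 : volBall n (R + r) ≤ volBall n (2 * R) := volBall_mono n (by linarith) (by linarith)
  rw [volBall_two_mul n (by linarith)] at h2
  rw [div_mul_eq_mul_div, le_div_iff₀ (volBall_pos n hr), Set.ncard_eq_toFinset_card _ (hfin x R)]
  exact h1.trans h2

/-- Double counting: integrate over the centre `y ∈ B(0, S)` the number of points of `A` in
`B(y, ρ)`. -/
lemma mul_volBall_le_of_forall_ncard {n : ℕ} {A : Set (Fin n → ℝ)}
    (hfin : ∀ x R, (A ∩ ball x R).Finite) {ρ : ℝ} {m : ℕ}
    (hm : ∀ y, m ≤ (A ∩ ball y ρ).ncard) (S : ℝ) :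
    (m : ℝ) * volBall n S ≤ ((A ∩ ball 0 (S + ρ)).ncard : ℝ) * volBall n ρ := by
  classical
  set F := (hfin 0 (S + ρ)).toFinset with hF
  have h1 : (m : ENNReal) * volume (ball (0 : Fin n → ℝ) S)
      ≤ ∑ a ∈ F, volume (ball a ρ) := by
    calc (m : ENNReal) * volume (ball (0 : Fin n → ℝ) S)
        = ∫⁻ _ in ball (0 : Fin n → ℝ) S, (m : ENNReal) := by rw [setLIntegral_const]
      _ ≤ ∫⁻ y in ball (0 : Fin n → ℝ) S,
            ∑ a ∈ F, (ball a ρ).indicator (fun _ => (1 : ENNReal)) y := by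
          refine setLIntegral_mono' measurableSet_ball fun y hy => ?_
          have e : ∑ a ∈ F, (ball a ρ).indicator (fun _ => (1 : ENNReal)) y
              = ((F.filter (fun a => y ∈ ball a ρ)).card : ENNReal) := by
            simp only [Set.indicator_apply]
            rw [Finset.sum_boole]
          rw [e]
          have hsub : A ∩ ball y ρ ⊆ (F.filter (fun a => y ∈ ball a ρ) : Finset _) := by
            intro a ha
            have ha2 := ha.2
            rw [mem_ball] at ha2 hy
            simp only [hF, Finset.coe_filter, Set.Finite.mem_toFinset, Set.mem_ofPred_eq]
            refine ⟨⟨ha.1, ?_⟩, mem_ball_comm.1 ha.2⟩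
            rw [mem_ball]
            have := dist_triangle a y 0
            linarith
          have := (hm y).trans (Set.ncard_le_ncard hsub (Finset.finite_toSet _))
          rw [Set.ncard_coe_finset] at this
          exact_mod_cast this
      _ ≤ ∫⁻ y, ∑ a ∈ F, (ball a ρ).indicator (fun _ => (1 : ENNReal)) y :=
          setLIntegral_le_lintegral _ _
      _ = ∑ a ∈ F, volume (ball a ρ) := by
          rw [lintegral_finsetSum]
          · simp [lintegral_indicator, measurableSet_ball]
          · exact fun a _ => measurable_const.indicator measurableSet_ball
  simp only [volume_ball_eq, Finset.sum_const, nsmul_eq_mul] at h1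
  rw [← ENNReal.ofReal_natCast, ← ENNReal.ofReal_natCast, ← ENNReal.ofReal_mul (by positivity),
    ← ENNReal.ofReal_mul (by positivity), ENNReal.ofReal_le_ofReal_iff
      (mul_nonneg (by positivity) (volBall_nonneg _ _))] at h1
  rw [Set.ncard_eq_toFinset_card _ (hfin 0 (S + ρ))]
  exact h1

/-- A Delone set has positive lower density (along balls centred at the origin). -/
lemma Delone.exists_le_density {n : ℕ} {Γ : Set (Fin n → ℝ)} (hΓ : Delone Γ) :
    ∃ c > 0, ∃ R₀ > 0, ∀ R ≥ R₀, c * volBall n R ≤ ((Γ ∩ ball 0 R).ncard : ℝ) := by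
  have hfin := hΓ.1.finite_inter_ball
  obtain ⟨L, hL, h⟩ := hΓ.2
  refine ⟨1 / (2 ^ n * volBall n L),
    div_pos one_pos (mul_pos (by positivity) (volBall_pos n hL)), 2 * L, by positivity,
    fun R hR => ?_⟩
  have h1 := mul_volBall_le_of_forall_ncard hfin (ρ := L) (m := 1) (fun y => by
    obtain ⟨v, hv, hd⟩ := h y
    exact (Set.ncard_pos (hfin y L)).2 ⟨v, hv, hd⟩) (R - L)
  rw [sub_add_cancel, Nat.cast_one, one_mul] at h1
  have h2 : volBall n (R / 2) ≤ volBall n (R - L) := volBall_mono n (by linarith) (by linarith)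
  have h3 := volBall_two_mul n (R := R / 2) (by linarith)
  rw [mul_div_cancel₀ R two_ne_zero] at h3
  have h4 : volBall n R ≤ 2 ^ n * volBall n (R - L) := by rw [h3]; gcongr
  have h5 : (2 : ℝ) ^ n * volBall n (R - L)
      ≤ 2 ^ n * (((Γ ∩ ball 0 R).ncard : ℝ) * volBall n L) := by gcongr
  rw [div_mul_eq_mul_div, one_mul, div_le_iff₀ (mul_pos (by positivity) (volBall_pos n hL))]
  linarith

/-! ### The sets of almost translations -/

lemma ncard_image_add_inter_ball {n : ℕ} (A : Set (Fin n → ℝ)) (w x : Fin n → ℝ) (R : ℝ) :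
    (((· + w) '' A) ∩ ball x R).ncard = (A ∩ ball (x - w) R).ncard := by
  rw [← Set.ncard_image_of_injective (A ∩ ball (x - w) R) (add_left_injective w)]
  congr 1
  ext y
  simp only [Set.mem_inter_iff, Set.mem_image, mem_ball, dist_eq_norm]
  constructor
  · rintro ⟨⟨a, ha, rfl⟩, hy⟩
    exact ⟨a, ⟨ha, by rwa [show a - (x - w) = a + w - x by abel]⟩, rfl⟩
  · rintro ⟨a, ⟨ha, hy⟩, rfl⟩
    exact ⟨⟨a, ha, rfl⟩, by rwa [show a + w - x = a - (x - w) by abel]⟩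

lemma UnifDiscrete.image_add {n : ℕ} {Γ : Set (Fin n → ℝ)} (hΓ : UnifDiscrete Γ)
    (v : Fin n → ℝ) : UnifDiscrete ((· + v) '' Γ) := by
  obtain ⟨r, hr, h⟩ := hΓ
  refine ⟨r, hr, fun x => ?_⟩
  rintro _ ⟨⟨a, ha, rfl⟩, hax⟩ _ ⟨⟨b, hb, rfl⟩, hbx⟩
  have := @h (x - v) a ⟨ha, ?_⟩ b ⟨hb, ?_⟩
  · rw [this]
  · simpa [mem_ball, dist_eq_norm, sub_sub_eq_add_sub] using hax
  · simpa [mem_ball, dist_eq_norm, sub_sub_eq_add_sub] using hbx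

lemma finite_symmDiff_inter_ball {n : ℕ} {Γ Γ' : Set (Fin n → ℝ)} (hΓ : UnifDiscrete Γ)
    (hΓ' : UnifDiscrete Γ') (x : Fin n → ℝ) (R : ℝ) : (symmDiff Γ Γ' ∩ ball x R).Finite := by
  refine ((hΓ.finite_inter_ball x R).union (hΓ'.finite_inter_ball x R)).subset ?_
  rw [← Set.union_inter_distrib_right]
  exact Set.inter_subset_inter_left _ symmDiff_le_sup

/-- For uniformly discrete sets the supremum defining `DRplus` is bounded, hence genuine. -/
lemma le_DRplus {n : ℕ} {Γ Γ' : Set (Fin n → ℝ)} (hΓ : UnifDiscrete Γ)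
    (hΓ' : UnifDiscrete Γ') (R : ℝ) (x : Fin n → ℝ) :
    ((symmDiff Γ Γ' ∩ ball x R).ncard : ℝ) / volBall n R ≤ DRplus R Γ Γ' := by
  obtain ⟨C, hC⟩ := hΓ.exists_ncard_le R
  obtain ⟨C', hC'⟩ := hΓ'.exists_ncard_le R
  refine le_ciSup (f := fun x => ((symmDiff Γ Γ' ∩ ball x R).ncard : ℝ) / volBall n R)
    ⟨(C + C') / volBall n R, ?_⟩ x
  rintro _ ⟨y, rfl⟩
  refine div_le_div_of_nonneg_right ?_ (volBall_nonneg n R)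
  have h1 : symmDiff Γ Γ' ∩ ball y R ⊆ (Γ ∩ ball y R) ∪ (Γ' ∩ ball y R) := by
    rw [← Set.union_inter_distrib_right]
    exact Set.inter_subset_inter_left _ symmDiff_le_sup
  have h2 := (Set.ncard_le_ncard h1
    ((hΓ.finite_inter_ball y R).union (hΓ'.finite_inter_ball y R))).trans
      (Set.ncard_union_le _ _)
  have h3 : ((symmDiff Γ Γ' ∩ ball y R).ncard : ℝ)
      ≤ (Γ ∩ ball y R).ncard + (Γ' ∩ ball y R).ncard := by exact_mod_cast h2
  linarith [hC y, hC' y]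

lemma symmDiff_image_add {n : ℕ} (A B : Set (Fin n → ℝ)) (w : Fin n → ℝ) :
    symmDiff ((· + w) '' A) ((· + w) '' B) = (· + w) '' symmDiff A B :=
  (Set.image_symmDiff (add_left_injective w) A B).symm

lemma image_add_image_add {n : ℕ} (A : Set (Fin n → ℝ)) (v w : Fin n → ℝ) :
    (· + w) '' ((· + v) '' A) = (· + (v + w)) '' A := by
  rw [Set.image_image]; simp [add_assoc]

lemma DRplus_add_le {n : ℕ} {Γ : Set (Fin n → ℝ)} (hΓ : UnifDiscrete Γ) (v w : Fin n → ℝ)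
    (R : ℝ) : DRplus R ((· + (v + w)) '' Γ) Γ
      ≤ DRplus R ((· + v) '' Γ) Γ + DRplus R ((· + w) '' Γ) Γ := by
  refine ciSup_le fun x => ?_
  have h1 := le_DRplus (hΓ.image_add v) hΓ R (x - w)
  have h2 := le_DRplus (hΓ.image_add w) hΓ R x
  refine le_trans ?_ (add_le_add h1 h2)
  rw [← add_div, ← ncard_image_add_inter_ball, ← symmDiff_image_add, image_add_image_add]
  refine div_le_div_of_nonneg_right ?_ (volBall_nonneg n R)
  have hsub : symmDiff ((· + (v + w)) '' Γ) Γ ∩ ball x R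
      ⊆ (symmDiff ((· + (v + w)) '' Γ) ((· + w) '' Γ) ∩ ball x R)
        ∪ (symmDiff ((· + w) '' Γ) Γ ∩ ball x R) := by
    rw [← Set.union_inter_distrib_right]
    exact Set.inter_subset_inter_left _ (symmDiff_triangle _ _ _)
  have hf := (finite_symmDiff_inter_ball (hΓ.image_add (v + w)) (hΓ.image_add w) x R).union
    (finite_symmDiff_inter_ball (hΓ.image_add w) hΓ x R)
  exact_mod_cast (Set.ncard_le_ncard hsub hf).trans (Set.ncard_union_le _ _)

lemma DRplus_neg_le {n : ℕ} {Γ : Set (Fin n → ℝ)} (hΓ : UnifDiscrete Γ) (v : Fin n → ℝ)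
    (R : ℝ) : DRplus R ((· + (-v)) '' Γ) Γ ≤ DRplus R ((· + v) '' Γ) Γ := by
  refine ciSup_le fun x => ?_
  have h1 := le_DRplus (hΓ.image_add v) hΓ R (x - -v)
  rw [← ncard_image_add_inter_ball, ← symmDiff_image_add, image_add_image_add] at h1
  simp only [add_neg_cancel, add_zero, Set.image_id'] at h1
  rwa [symmDiff_comm]

lemma NEps_mono {n : ℕ} (Γ : Set (Fin n → ℝ)) {s t : ℝ} (h : s ≤ t) : NEps Γ s ⊆ NEps Γ t :=
  fun _ ⟨R, hR, hv⟩ => ⟨R, hR, fun R' hR' => (hv R' hR').trans_le h⟩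

lemma neg_mem_NEps {n : ℕ} {Γ : Set (Fin n → ℝ)} (hΓ : UnifDiscrete Γ) {s : ℝ}
    {v : Fin n → ℝ} (hv : v ∈ NEps Γ s) : -v ∈ NEps Γ s := by
  obtain ⟨R, hR, h⟩ := hv
  exact ⟨R, hR, fun R' hR' => (DRplus_neg_le hΓ v R').trans_lt (h R' hR')⟩

lemma add_mem_NEps {n : ℕ} {Γ : Set (Fin n → ℝ)} (hΓ : UnifDiscrete Γ) {s t : ℝ}
    {v w : Fin n → ℝ} (hv : v ∈ NEps Γ s) (hw : w ∈ NEps Γ t) : v + w ∈ NEps Γ (s + t) := by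
  obtain ⟨R, hR, h⟩ := hv
  obtain ⟨S, hS, h'⟩ := hw
  refine ⟨max R S, lt_max_of_lt_left hR, fun R' hR' => (DRplus_add_le hΓ v w R').trans_lt ?_⟩
  exact add_lt_add (h R' ((le_max_left _ _).trans hR')) (h' R' ((le_max_right _ _).trans hR'))

lemma sub_mem_NEps {n : ℕ} {Γ : Set (Fin n → ℝ)} (hΓ : UnifDiscrete Γ) {s t : ℝ}
    {v w : Fin n → ℝ} (hv : v ∈ NEps Γ s) (hw : w ∈ NEps Γ t) : v - w ∈ NEps Γ (s + t) := by
  rw [sub_eq_add_neg]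
  exact add_mem_NEps hΓ hv (neg_mem_NEps hΓ hw)

lemma RelDense.mono {n : ℕ} {M N : Set (Fin n → ℝ)} (h : RelDense M) (hMN : M ⊆ N) :
    RelDense N := by
  obtain ⟨L, hL, h⟩ := h
  refine ⟨L, hL, fun x => ?_⟩
  obtain ⟨v, hv, hd⟩ := h x
  exact ⟨v, hMN hv, hd⟩

lemma UnifDiscrete.mono {n : ℕ} {M N : Set (Fin n → ℝ)} (h : UnifDiscrete N) (hMN : M ⊆ N) :
    UnifDiscrete M := by
  obtain ⟨r, hr, h⟩ := h
  exact ⟨r, hr, fun x => (h x).anti (Set.inter_subset_inter_left _ hMN)⟩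

lemma relDense_NEps {n : ℕ} {Γ : Set (Fin n → ℝ)} (hΓ : IsAPP Γ) {s : ℝ} (hs : 0 < s) :
    RelDense (NEps Γ s) := by
  obtain ⟨R, hR, h⟩ := hΓ.2 s hs
  exact h.mono fun v hv => ⟨R, hR, hv⟩

/-- Short nonzero vectors displace all of `Γ`, so they are not almost translations of small
defect. -/
lemma unifDiscrete_NEps {n : ℕ} {Γ : Set (Fin n → ℝ)} (hΓ : Delone Γ) :
    ∃ s > 0, UnifDiscrete (NEps Γ s) := by
  obtain ⟨c, hc, R₀, hR₀, hlow⟩ := hΓ.exists_le_density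
  have hud := hΓ.1
  obtain ⟨r, hr, hsub⟩ := hΓ.1
  have key : ∀ v ∈ NEps Γ c, dist v 0 < r → v = 0 := by
    rintro v ⟨R', hR', hv⟩ hvr
    by_contra hne
    have hR1 : 0 < max R' R₀ := lt_max_of_lt_left hR'
    have h1 := (le_DRplus (hud.image_add v) hud (max R' R₀) 0).trans_lt
      (hv _ (le_max_left _ _))
    rw [div_lt_iff₀ (volBall_pos n hR1)] at h1
    have h2 := hlow (max R' R₀) (le_max_right _ _)
    have hinc : Γ ∩ ball 0 (max R' R₀)
        ⊆ symmDiff ((· + v) '' Γ) Γ ∩ ball 0 (max R' R₀) := by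
      refine Set.inter_subset_inter_left _ fun g hg => Or.inr ⟨hg, ?_⟩
      rintro ⟨g', hg', rfl⟩
      have := @hsub g' g' ⟨hg', mem_ball_self hr⟩ (g' + v) ⟨hg, by
        simpa [mem_ball, dist_eq_norm] using hvr⟩
      exact hne (by simpa using this)
    have h3 : ((Γ ∩ ball 0 (max R' R₀)).ncard : ℝ)
        ≤ (symmDiff ((· + v) '' Γ) Γ ∩ ball 0 (max R' R₀)).ncard := by
      exact_mod_cast Set.ncard_le_ncard hinc
        (finite_symmDiff_inter_ball (hud.image_add v) hud _ _)
    linarith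
  refine ⟨c / 2, by positivity, r / 2, by positivity, fun x => ?_⟩
  rintro a ⟨ha, hax⟩ b ⟨hb, hbx⟩
  have h1 := sub_mem_NEps hud ha hb
  rw [add_halves] at h1
  refine sub_eq_zero.1 (key _ h1 ?_)
  rw [mem_ball] at hax hbx
  have := dist_triangle_right a b x
  rw [dist_zero_right, ← dist_eq_norm]
  linarith

/-! ### Annuli -/

/-- The annulus of inner radius `t - δ` and outer radius `t + δ` for the pseudo-norm whose balls
are the sets `NEps Γ s`. -/
def annulus {n : ℕ} (Γ : Set (Fin n → ℝ)) (t δ : ℝ) : Set (Fin n → ℝ) :=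
  NEps Γ (t + δ) \ NEps Γ (t - δ)

/-- The value `t` is `c`-thick if for each `δ > 0` the uniform upper density of the annulus
`annulus Γ t δ` is at least `c`. Only annuli contained in `NEps Γ s` are considered: when that set
is uniformly discrete, the counts concern finite sets, so that `ncard` is not a junk value. -/
def Thick {n : ℕ} (Γ : Set (Fin n → ℝ)) (s c t : ℝ) : Prop :=
  ∀ δ > 0, t + δ ≤ s → ∀ R₀ > 0, ∃ R ≥ R₀, ∃ x,
    c * volBall n R ≤ ((annulus Γ t δ ∩ ball x R).ncard : ℝ)

lemma symmDiff_subset_annulus {n : ℕ} {Γ : Set (Fin n → ℝ)} (hΓ : UnifDiscrete Γ) {t δ : ℝ}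
    (hδ : 0 ≤ δ) {w : Fin n → ℝ} (hw : w ∈ NEps Γ δ) :
    symmDiff ((· + w) '' NEps Γ t) (NEps Γ t) ⊆ annulus Γ t δ := by
  rintro v (⟨⟨u, hu, rfl⟩, hv⟩ | ⟨hv, hv'⟩)
  · exact ⟨add_mem_NEps hΓ hu hw, fun h => hv (NEps_mono Γ (by linarith) h)⟩
  · refine ⟨NEps_mono Γ (by linarith) hv, fun h => hv' ⟨v - w, ?_, by simp⟩⟩
    simpa using sub_mem_NEps hΓ h hw

lemma add_mem_annulus {n : ℕ} {Γ : Set (Fin n → ℝ)} (hΓ : UnifDiscrete Γ) {t δ : ℝ}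
    {v w : Fin n → ℝ} (hv : v ∈ annulus Γ t δ) (hw : w ∈ NEps Γ δ) :
    v + w ∈ annulus Γ t (2 * δ) := by
  refine ⟨?_, fun h => hv.2 ?_⟩
  · have := add_mem_NEps hΓ hv.1 hw
    rwa [add_assoc, ← two_mul] at this
  · have := sub_mem_NEps hΓ h hw
    rw [add_sub_cancel_right] at this
    convert this using 2
    ring

lemma disjoint_annulus {n : ℕ} (Γ : Set (Fin n → ℝ)) {t t' δ : ℝ} (h : 4 * δ ≤ |t - t'|) :
    Disjoint (annulus Γ t (2 * δ)) (annulus Γ t' (2 * δ)) := by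
  refine Set.disjoint_left.2 fun v hv hv' => ?_
  rcases le_abs.1 h with h | h
  · exact hv.2 (NEps_mono Γ (by linarith) hv'.1)
  · exact hv'.2 (NEps_mono Γ (by linarith) hv.1)

/-- Since `annulus Γ t δ + NEps Γ δ ⊆ annulus Γ t (2 * δ)`, one large ball densely filled by
`annulus Γ t δ` is repeated, up to a bounded displacement, around every point of space. -/
lemma Thick.exists_le_ncard {n : ℕ} {Γ : Set (Fin n → ℝ)} (hΓ : IsAPP Γ) {s c t δ : ℝ}
    (hδ : 0 < δ) (ht : Thick Γ s c t) (hδs : t + 2 * δ ≤ s)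
    (hud : UnifDiscrete (NEps Γ s)) :
    ∃ S₀ > 0, ∀ S ≥ S₀,
      c * volBall n S ≤ 2 ^ n * ((annulus Γ t (2 * δ) ∩ ball 0 (2 * S)).ncard : ℝ) := by
  have hfin : ∀ x R, (annulus Γ t (2 * δ) ∩ ball x R).Finite :=
    (hud.mono (Set.sdiff_subset.trans (NEps_mono Γ hδs))).finite_inter_ball
  obtain ⟨L, hL, hdense⟩ := relDense_NEps hΓ hδ
  obtain ⟨R, hR, x, hx⟩ := ht δ hδ (by linarith) L hL
  have hRpos : 0 < R := hL.trans_le hR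
  refine ⟨R + L, by positivity, fun S hS => ?_⟩
  have hSpos : 0 < S := by linarith
  have hcopy : ∀ y, (annulus Γ t δ ∩ ball x R).ncard
      ≤ (annulus Γ t (2 * δ) ∩ ball y (R + L)).ncard := by
    intro y
    obtain ⟨w, hw, hwd⟩ := hdense (y - x)
    rw [← Set.ncard_image_of_injective (annulus Γ t δ ∩ ball x R) (add_left_injective w)]
    refine Set.ncard_le_ncard ?_ (hfin _ _)
    rintro _ ⟨v, ⟨hv, hvx⟩, rfl⟩
    refine ⟨add_mem_annulus hΓ.1.1 hv hw, ?_⟩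
    rw [mem_ball, dist_eq_norm] at hvx ⊢
    rw [dist_eq_norm] at hwd
    have := norm_add_le (v - x) (w - (y - x))
    rw [show v - x + (w - (y - x)) = v + w - y by abel] at this
    linarith
  have h1 := mul_volBall_le_of_forall_ncard hfin hcopy S
  have h2 : ((annulus Γ t (2 * δ) ∩ ball 0 (S + (R + L))).ncard : ℝ)
      ≤ (annulus Γ t (2 * δ) ∩ ball 0 (2 * S)).ncard := by
    exact_mod_cast Set.ncard_le_ncard
      (Set.inter_subset_inter_right _ (ball_subset_ball (by linarith))) (hfin _ _)
  have h3 : volBall n (R + L) ≤ 2 ^ n * volBall n R := by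
    rw [← volBall_two_mul n hRpos]
    exact volBall_mono n (by positivity) (by linarith)
  have hVR := volBall_pos n hRpos
  have hVS := volBall_pos n hSpos
  have h4 : c * volBall n R * volBall n S
      ≤ ((annulus Γ t (2 * δ) ∩ ball 0 (2 * S)).ncard : ℝ) * (2 ^ n * volBall n R) := by
    calc c * volBall n R * volBall n S
        ≤ ((annulus Γ t δ ∩ ball x R).ncard : ℝ) * volBall n S := by gcongr
      _ ≤ _ := h1
      _ ≤ _ := by
        refine mul_le_mul h2 h3 (volBall_nonneg _ _) (by positivity)
  refine le_of_mul_le_mul_right ?_ hVR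
  linarith

lemma finite_thick {n : ℕ} {Γ : Set (Fin n → ℝ)} (hΓ : IsAPP Γ) {s c : ℝ} (hc : 0 < c)
    (hud : UnifDiscrete (NEps Γ s)) : {t | t < s ∧ Thick Γ s c t}.Finite := by
  classical
  by_contra hinf
  obtain ⟨K, hK, R₀, hR₀, hKR⟩ := hud.exists_density_le
  obtain ⟨k, hk⟩ := exists_nat_gt (2 ^ n * (K * 2 ^ n) / c)
  obtain ⟨F, hF, hcard⟩ := Set.Infinite.exists_subset_card_eq hinf k
  obtain ⟨δ, hδ, hsep, hlt⟩ : ∃ δ > 0, (∀ p ∈ F.offDiag, 4 * δ ≤ |p.1 - p.2|) ∧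
      ∀ t ∈ F, t + 2 * δ ≤ s := by
    have hev : ∀ b : ℝ, 0 < b → ∀ m : ℝ, 0 < m → ∀ᶠ δ in nhdsWithin (0 : ℝ) (Ioi 0),
        m * δ ≤ b := by
      intro b hb m hm
      filter_upwards [Ioo_mem_nhdsGT (div_pos hb hm)] with δ hδ
      exact ((lt_div_iff₀' hm).1 hδ.2).le
    have e1 : ∀ᶠ δ in nhdsWithin (0 : ℝ) (Ioi 0), ∀ p ∈ F.offDiag, 4 * δ ≤ |p.1 - p.2| :=
      (Filter.eventually_all_finset _).2 fun p hp =>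
        hev _ (abs_pos.2 (sub_ne_zero.2 (Finset.mem_offDiag.1 hp).2.2)) 4 (by norm_num)
    have e2 : ∀ᶠ δ in nhdsWithin (0 : ℝ) (Ioi 0), ∀ t ∈ F, 2 * δ ≤ s - t :=
      (Filter.eventually_all_finset _).2 fun t ht =>
        hev _ (sub_pos.2 (hF ht).1) 2 (by norm_num)
    obtain ⟨δ, ⟨h1, h2⟩, h3⟩ := ((e1.and e2).and self_mem_nhdsWithin).exists
    exact ⟨δ, h3, h1, fun t ht => by linarith [h2 t ht]⟩
  have hsubs : ∀ t ∈ F, annulus Γ t (2 * δ) ⊆ NEps Γ s := fun t ht =>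
    Set.sdiff_subset.trans (NEps_mono Γ (hlt t ht))
  have hex : ∀ t ∈ F, ∀ᶠ S in atTop,
      c * volBall n S ≤ 2 ^ n * ((annulus Γ t (2 * δ) ∩ ball 0 (2 * S)).ncard : ℝ) := by
    intro t ht
    obtain ⟨S₀, -, h⟩ := (hF ht).2.exists_le_ncard hΓ hδ (hlt t ht) hud
    exact Filter.eventually_atTop.2 ⟨S₀, h⟩
  obtain ⟨S, hS, hSR⟩ :=
    (((Filter.eventually_all_finset F).2 hex).and (Filter.eventually_ge_atTop R₀)).exists
  have hSpos : 0 < S := hR₀.trans_le hSR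
  have hfin := hud.finite_inter_ball 0 (2 * S)
  have hsum : ∑ t ∈ F, (annulus Γ t (2 * δ) ∩ ball 0 (2 * S)).ncard
      ≤ (NEps Γ s ∩ ball 0 (2 * S)).ncard := by
    have hf : ∀ t ∈ F, (annulus Γ t (2 * δ) ∩ ball 0 (2 * S)).Finite := fun t ht =>
      hfin.subset (Set.inter_subset_inter_left _ (hsubs t ht))
    have hdis : Set.PairwiseDisjoint (F : Set ℝ)
        (fun t => annulus Γ t (2 * δ) ∩ ball 0 (2 * S)) := by
      intro a ha b hb hab
      exact (disjoint_annulus Γ (hsep (a, b) (Finset.mem_offDiag.2 ⟨ha, hb, hab⟩))).mono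
        Set.inter_subset_left Set.inter_subset_left
    rw [← finsum_mem_coe_finset, ← F.finite_toSet.ncard_biUnion hf hdis]
    exact Set.ncard_le_ncard
      (Set.iUnion₂_subset fun t ht => Set.inter_subset_inter_left _ (hsubs t ht)) hfin
  have hsum' : ∑ t ∈ F, ((annulus Γ t (2 * δ) ∩ ball 0 (2 * S)).ncard : ℝ)
      ≤ (NEps Γ s ∩ ball 0 (2 * S)).ncard := by exact_mod_cast hsum
  have h1 := Finset.sum_le_sum hS
  rw [Finset.sum_const, hcard, nsmul_eq_mul, ← Finset.mul_sum] at h1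
  have h2 := hKR (2 * S) (by linarith) 0
  rw [volBall_two_mul n hSpos] at h2
  have hV := volBall_pos n hSpos
  rw [div_lt_iff₀ hc] at hk
  have h3 : (2 : ℝ) ^ n * ∑ t ∈ F, ((annulus Γ t (2 * δ) ∩ ball 0 (2 * S)).ncard : ℝ)
      ≤ 2 ^ n * (K * (2 ^ n * volBall n S)) := by gcongr; exact hsum'.trans h2
  have h4 := mul_lt_mul_of_pos_right hk hV
  linarith

lemma isAPP_NEps {n : ℕ} {Γ : Set (Fin n → ℝ)} (hΓ : IsAPP Γ) {s t : ℝ} (ht : 0 < t)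
    (hts : t < s)
    (hud : UnifDiscrete (NEps Γ s)) (hthin : ∀ c > 0, ¬ Thick Γ s c t) :
    IsAPP (NEps Γ t) := by
  refine ⟨⟨hud.mono (NEps_mono Γ hts.le), relDense_NEps hΓ ht⟩, fun η hη => ?_⟩
  have h := hthin (η / 2) (by positivity)
  unfold Thick at h
  push Not at h
  obtain ⟨δ, hδ, hδs, R₀, hR₀, h⟩ := h
  refine ⟨R₀, hR₀, (relDense_NEps hΓ hδ).mono fun w hw R hR => ?_⟩
  refine lt_of_le_of_lt (ciSup_le fun x => ?_) (half_lt_self hη)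
  rw [div_le_iff₀ (volBall_pos n (hR₀.trans_le hR))]
  refine le_trans ?_ (h R hR x).le
  exact_mod_cast Set.ncard_le_ncard
    (Set.inter_subset_inter_left _ (symmDiff_subset_annulus hΓ.1.1 hδ.le hw))
    ((hud.mono (Set.sdiff_subset.trans (NEps_mono Γ hδs))).finite_inter_ball x R)

theorem stmt17 {n : ℕ} (Γ : Set (Fin n → ℝ)) (hΓ : IsAPP Γ) (ε : ℝ) (hε : 0 < ε) :
    ∃ P ⊆ NEps Γ ε, RelDense P ∧ IsAPP P := by
  obtain ⟨s, hs, hud⟩ := unifDiscrete_NEps hΓ.1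
  have hcount : (⋃ k : ℕ, {t | t < s ∧ Thick Γ s (1 / ((k : ℝ) + 1)) t}).Countable :=
    Set.countable_iUnion fun k => (finite_thick hΓ (by positivity) hud).countable
  obtain ⟨t, ht, htk⟩ : ∃ t ∈ Ioo 0 (min ε s),
      t ∉ ⋃ k : ℕ, {t | t < s ∧ Thick Γ s (1 / ((k : ℝ) + 1)) t} := by
    by_contra! hcon
    exact (lt_min hε hs).not_ge (Cardinal.Real.Ioo_countable_iff.1 (hcount.mono hcon))
  have hts : t < s := ht.2.trans_le (min_le_right _ _)
  refine ⟨NEps Γ t, NEps_mono Γ (ht.2.le.trans (min_le_left _ _)), relDense_NEps hΓ ht.1,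
    isAPP_NEps hΓ ht.1 hts hud fun c hc hthick => htk ?_⟩
  obtain ⟨k, hk⟩ := exists_nat_one_div_lt hc
  refine Set.mem_iUnion.2 ⟨k, hts, fun δ hδ hδs R₀ hR₀ => ?_⟩
  obtain ⟨R, hR, x, hx⟩ := hthick δ hδ hδs R₀ hR₀
  exact ⟨R, hR, x, (mul_le_mul_of_nonneg_right hk.le (volBall_nonneg n R)).trans hx⟩
end

section
/- Let Γ ⊆ ℝⁿ be weakly almost periodic and let J ⊆ ℝⁿ be a Jordan-measurable set with positive Lebesgue measure. Then the density of Γ along dilates of J exists uniformly: there exists D_J(Γ) such that for every ε > 0 there exists R_ε > 0 with |Card((x + R·J) ∩ Γ)/Vol(R·J) − D_J(Γ)| < ε for all R > R_ε and all x ∈ ℝⁿ, where R·J = {Ry : y ∈ J}; moreover D_J(Γ) equals the uniform density D(Γ) of Γ. -/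
/-!
The proof is a double count. By weak almost periodicity, for each `ε` some radius `R` makes the
count `f x = card (Γ ∩ ball x R)` equal to a constant `c₀` up to `ε * vol (ball 0 R)`, uniformly in
`x` (`IsWAP.exists_radius`). Integrating `f` over a set `U` gives the sum of the volumes
`vol (ball γ R ∩ U)` over `γ ∈ Γ` (`lintegral_ncard_ball`). Taking for `U` the `R`-thickening of
`A = x + r • J`, respectively its `R`-erosion, bounds `card (Γ ∩ A) * vol (ball 0 R)` from above,
respectively below, by about `c₀ * vol U`. After rescaling by `r` these sets become the
`R / r`-thickening and erosion of `J`, whose volumes tend to that of `J` because the boundary of a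
Jordan-measurable set is null (`JordanMeas.volume_frontier`).

So the densities in large dilates are all within `ε` of `c₀ / vol (ball 0 R)`, a constant that
does not involve `J` (`exists_approx_density`). Letting `ε → 0`, these constants form a Cauchy
sequence, and their limit is the density for every `J` at once (`exists_density`). The unit ball is
one admissible `J`, which identifies the limit with the uniform density.
-/

open MeasureTheory Metric Set Filter

def IsWAP {n : ℕ} (Γ : Set (Fin n → ℝ)) : Prop :=
  Delone Γ ∧ ∀ ε > (0:ℝ), ∃ R > (0:ℝ), ∀ x y : Fin n → ℝ, ∃ v : Fin n → ℝ,
    ((symmDiff (Metric.ball x R ∩ Γ) ((· - v) '' (Metric.ball y R ∩ Γ))).ncard : ℝ)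
      ≤ ε * volBall n R

def CubeUnion {n : ℕ} (C : Set (Fin n → ℝ)) : Prop :=
  ∃ s : Finset ((Fin n → ℝ) × ℝ), C = ⋃ p ∈ s, Metric.ball p.1 p.2

def JordanMeas {n : ℕ} (J : Set (Fin n → ℝ)) : Prop :=
  ∀ ε > (0:ℝ), ∃ C C' : Set (Fin n → ℝ), CubeUnion C ∧ CubeUnion C' ∧
    C ⊆ J ∧ J ⊆ C' ∧ (volume (C' \ C)).toReal < ε

/-! ### Counting points of a uniformly discrete set -/

/-- Separated points meet a bounded set in finitely many places. -/
lemma UnifDiscrete.finite_inter {n : ℕ} {Γ : Set (Fin n → ℝ)} (h : UnifDiscrete Γ)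
    {A : Set (Fin n → ℝ)} (hA : Bornology.IsBounded A) : (A ∩ Γ).Finite := by
  obtain ⟨r, hr, hs⟩ := h
  obtain ⟨t, ht, hcov⟩ := Metric.totallyBounded_iff.1
    (hA.isCompact_closure.totallyBounded.subset subset_closure) r hr
  refine (ht.biUnion fun y _ => (hs y).finite).subset ?_
  rintro x ⟨hxA, hxΓ⟩
  obtain ⟨y, hy, hxy⟩ := mem_iUnion₂.1 (hcov hxA)
  exact mem_iUnion₂.2 ⟨y, hy, hxΓ, hxy⟩

lemma UnifDiscrete.countable {n : ℕ} {Γ : Set (Fin n → ℝ)} (h : UnifDiscrete Γ) :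
    Γ.Countable := by
  have hΓ : Γ = ⋃ k : ℕ, (ball (0 : Fin n → ℝ) k ∩ Γ) := by
    rw [← iUnion_inter, Metric.iUnion_ball_nat, univ_inter]
  rw [hΓ]
  exact countable_iUnion fun k => (h.finite_inter isBounded_ball).countable

lemma tsum_indicator_eq_ncard {n : ℕ} {Γ : Set (Fin n → ℝ)} (h : UnifDiscrete Γ)
    {A : Set (Fin n → ℝ)} (hA : Bornology.IsBounded A) :
    ∑' γ : Γ, A.indicator (1 : (Fin n → ℝ) → ENNReal) γ = ((A ∩ Γ).ncard : ENNReal) := by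
  rw [tsum_subtype Γ (A.indicator (1 : (Fin n → ℝ) → ENNReal)), indicator_indicator, inter_comm]
  have := tsum_subtype (A ∩ Γ) (1 : (Fin n → ℝ) → ENNReal)
  rw [← this]
  have h2 := ENNReal.tsum_set_one (A ∩ Γ)
  rw [← (h.finite_inter hA).cast_ncard_eq] at h2
  simpa using h2

/-- Double counting: the number of points of `Γ` within `R` of `x`, integrated over `x ∈ U`, is the
sum over the points of `Γ` of the volume of the part of their `R`-ball lying in `U`. -/
lemma lintegral_ncard_ball {n : ℕ} {Γ : Set (Fin n → ℝ)} (h : UnifDiscrete Γ)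
    (U : Set (Fin n → ℝ)) (R : ℝ) :
    ∫⁻ x in U, ((ball x R ∩ Γ).ncard : ENNReal) = ∑' γ : Γ, volume (ball (γ : Fin n → ℝ) R ∩ U) := by
  have := h.countable.to_subtype
  have h1 : ∀ x : Fin n → ℝ, ((ball x R ∩ Γ).ncard : ENNReal) =
      ∑' γ : Γ, (ball (γ : Fin n → ℝ) R).indicator (1 : (Fin n → ℝ) → ENNReal) x := by
    intro x
    rw [← tsum_indicator_eq_ncard h isBounded_ball]
    refine tsum_congr fun γ => ?_
    simp only [indicator, mem_ball, dist_comm, Pi.one_apply]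
  simp_rw [h1]
  rw [lintegral_tsum fun γ => (measurable_one.indicator measurableSet_ball).aemeasurable]
  refine tsum_congr fun γ => ?_
  rw [lintegral_indicator_one measurableSet_ball, Measure.restrict_apply measurableSet_ball]

/-- Upper half of the double count, for any `U` containing the `R`-balls around the points of `A`. -/
lemma ncard_mul_volBall_le {n : ℕ} {Γ : Set (Fin n → ℝ)} (h : UnifDiscrete Γ) {R M : ℝ}
    (hM : ∀ x : Fin n → ℝ, ((ball x R ∩ Γ).ncard : ℝ) ≤ M)
    {A U : Set (Fin n → ℝ)} (hA : Bornology.IsBounded A) (hU : volume U ≠ ⊤)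
    (hAU : ∀ γ ∈ A, ball γ R ⊆ U) :
    ((A ∩ Γ).ncard : ℝ) * volBall n R ≤ M * (volume U).toReal := by
  have hM0 : 0 ≤ M := (Nat.cast_nonneg _).trans (hM 0)
  have key : ((A ∩ Γ).ncard : ENNReal) * volume (ball (0 : Fin n → ℝ) R) ≤
      ENNReal.ofReal M * volume U := by
    rw [← tsum_indicator_eq_ncard h hA, ← ENNReal.tsum_mul_right]
    calc _ ≤ ∑' γ : Γ, volume (ball (γ : Fin n → ℝ) R ∩ U) := by
          refine ENNReal.tsum_le_tsum fun γ => ?_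
          by_cases hγ : (γ : Fin n → ℝ) ∈ A
          · rw [inter_eq_left.2 (hAU _ hγ), indicator_of_mem hγ, Pi.one_apply, one_mul,
              Measure.addHaar_ball_center volume (γ : Fin n → ℝ)]
          · simp [hγ]
      _ = ∫⁻ x in U, ((ball x R ∩ Γ).ncard : ENNReal) := (lintegral_ncard_ball h U R).symm
      _ ≤ ∫⁻ x in U, ENNReal.ofReal M := by
          refine lintegral_mono fun x => ?_
          rw [← ENNReal.ofReal_natCast]
          exact ENNReal.ofReal_le_ofReal (hM x)
      _ = _ := setLIntegral_const _ _
  have := ENNReal.toReal_mono (ENNReal.mul_ne_top ENNReal.ofReal_ne_top hU) key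
  simpa [ENNReal.toReal_mul, hM0, volBall] using this

/-- Lower half of the double count, for any `L` no point of which is within `R` of the complement of
`A`. -/
lemma le_ncard_mul_volBall {n : ℕ} {Γ : Set (Fin n → ℝ)} (h : UnifDiscrete Γ) {R m : ℝ}
    (hm : ∀ x : Fin n → ℝ, m ≤ ((ball x R ∩ Γ).ncard : ℝ))
    {A L : Set (Fin n → ℝ)} (hA : Bornology.IsBounded A)
    (hAL : ∀ γ, ∀ z ∈ L, dist z γ < R → γ ∈ A) :
    m * (volume L).toReal ≤ ((A ∩ Γ).ncard : ℝ) * volBall n R := by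
  rcases le_or_gt m 0 with hm0 | hm0
  · exact (mul_nonpos_of_nonpos_of_nonneg hm0 ENNReal.toReal_nonneg).trans
      (mul_nonneg (Nat.cast_nonneg _) ENNReal.toReal_nonneg)
  have key : ENNReal.ofReal m * volume L ≤
      ((A ∩ Γ).ncard : ENNReal) * volume (ball (0 : Fin n → ℝ) R) := by
    rw [← tsum_indicator_eq_ncard h hA, ← ENNReal.tsum_mul_right]
    calc _ = ∫⁻ x in L, ENNReal.ofReal m := (setLIntegral_const _ _).symm
      _ ≤ ∫⁻ x in L, ((ball x R ∩ Γ).ncard : ENNReal) := by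
          refine lintegral_mono fun x => ?_
          rw [← ENNReal.ofReal_natCast]
          exact ENNReal.ofReal_le_ofReal (hm x)
      _ = ∑' γ : Γ, volume (ball (γ : Fin n → ℝ) R ∩ L) := lintegral_ncard_ball h L R
      _ ≤ _ := by
          refine ENNReal.tsum_le_tsum fun γ => ?_
          by_cases hγ : (γ : Fin n → ℝ) ∈ A
          · rw [indicator_of_mem hγ, Pi.one_apply, one_mul,
              ← Measure.addHaar_ball_center volume (γ : Fin n → ℝ)]
            exact measure_mono inter_subset_left
          · have : ball (γ : Fin n → ℝ) R ∩ L = ∅ := by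
              refine eq_empty_of_forall_notMem fun z hz => hγ (hAL _ z hz.2 hz.1)
            simp [this]
  have := ENNReal.toReal_mono (ENNReal.mul_ne_top (ENNReal.natCast_ne_top _)
    measure_ball_lt_top.ne) key
  simpa [ENNReal.toReal_mul, hm0.le, volBall] using this

/-! ### Weak almost periodicity -/

lemma abs_ncard_sub_le {α : Type*} {S T : Set α} (hS : S.Finite) (hT : T.Finite) :
    |(S.ncard : ℝ) - T.ncard| ≤ (symmDiff S T).ncard := by
  have hfin : (symmDiff S T).Finite := hS.symmDiff hT
  have h1 : S.ncard ≤ (symmDiff S T).ncard + T.ncard :=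
    (ncard_le_ncard_sdiff_add_ncard S T hT).trans
      (Nat.add_le_add_right (ncard_le_ncard (fun x hx => Or.inl hx) hfin) _)
  have h2 : T.ncard ≤ (symmDiff S T).ncard + S.ncard :=
    (ncard_le_ncard_sdiff_add_ncard T S hS).trans
      (Nat.add_le_add_right (ncard_le_ncard (fun x hx => Or.inr hx) hfin) _)
  have h1' : (S.ncard : ℝ) ≤ (symmDiff S T).ncard + T.ncard := by exact_mod_cast h1
  have h2' : (T.ncard : ℝ) ≤ (symmDiff S T).ncard + S.ncard := by exact_mod_cast h2
  rw [abs_le]; constructor <;> linarith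

/-- Weak almost periodicity makes the number of points in a ball of one suitable radius almost
independent of the centre. -/
lemma IsWAP.exists_radius {n : ℕ} {Γ : Set (Fin n → ℝ)} (hΓ : IsWAP Γ) {ε : ℝ} (hε : 0 < ε) :
    ∃ R > (0:ℝ), ∀ x : Fin n → ℝ,
      |((ball x R ∩ Γ).ncard : ℝ) - (ball (0 : Fin n → ℝ) R ∩ Γ).ncard| ≤ ε * volBall n R := by
  obtain ⟨R, hR, h⟩ := hΓ.2 ε hε
  refine ⟨R, hR, fun x => ?_⟩
  obtain ⟨v, hv⟩ := h x 0
  have hf := fun y : Fin n → ℝ => hΓ.1.1.finite_inter (isBounded_ball (x := y) (r := R))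
  have := abs_ncard_sub_le (hf x) ((hf 0).image (· - v))
  rw [ncard_image_of_injective _ (sub_left_injective (b := v))] at this
  exact this.trans hv

/-! ### Dilates, thickenings and erosions -/

section

open scoped Pointwise

lemma image_affine {n : ℕ} (r : ℝ) (x : Fin n → ℝ) (S : Set (Fin n → ℝ)) :
    (fun y => x + r • y) '' S = (fun y => x + y) '' (r • S) := by
  rw [← image_smul, image_image]

lemma image_affine_unitBall {n : ℕ} {r : ℝ} (hr : 0 < r) (x : Fin n → ℝ) :
    (fun y => x + r • y) '' ball 0 1 = ball x r := by
  rw [image_affine, smul_unitBall_of_pos hr]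
  simp

lemma isBounded_image_affine {n : ℕ} (r : ℝ) (x : Fin n → ℝ) {S : Set (Fin n → ℝ)}
    (hS : Bornology.IsBounded S) : Bornology.IsBounded ((fun y => x + r • y) '' S) := by
  rw [image_affine]
  exact (hS.smul₀ r).vadd x

lemma volume_image_affine {n : ℕ} {r : ℝ} (hr : 0 < r) (x : Fin n → ℝ) (S : Set (Fin n → ℝ)) :
    (volume ((fun y => x + r • y) '' S)).toReal = r ^ n * (volume S).toReal := by
  rw [image_affine, image_add_left, measure_preimage_add, Measure.addHaar_smul, ENNReal.toReal_mul]
  simp [abs_of_pos hr, hr.le]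

end

lemma tendsto_volume_cthickening {n : ℕ} {J : Set (Fin n → ℝ)} (hb : Bornology.IsBounded J)
    (hf : volume (frontier J) = 0) :
    Tendsto (fun δ => (volume (cthickening δ J)).toReal) (nhds 0) (nhds (volume J).toReal) := by
  have h := tendsto_measure_cthickening (μ := volume) (s := J)
    ⟨1, one_pos, hb.cthickening.measure_lt_top.ne⟩
  have hcl : volume (closure J) = volume J := by
    refine le_antisymm ?_ (measure_mono subset_closure)
    rw [closure_eq_self_union_frontier]
    exact (measure_union_le _ _).trans (by rw [hf, add_zero])
  rw [hcl] at h
  exact (ENNReal.tendsto_toReal hb.measure_lt_top.ne).comp h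

/-- The points of `J` at distance more than `δ` from its complement fill `J` up in measure. -/
lemma tendsto_volume_erosion {n : ℕ} {J : Set (Fin n → ℝ)} (hb : Bornology.IsBounded J)
    (hf : volume (frontier J) = 0) :
    Tendsto (fun δ => (volume (cthickening δ Jᶜ)ᶜ).toReal) (nhds 0) (nhds (volume J).toReal) := by
  have hJt : volume J ≠ ⊤ := hb.measure_lt_top.ne
  have hle : ∀ δ, volume ((cthickening δ Jᶜ)ᶜ) =
      volume J - (volume.restrict J) (cthickening δ Jᶜ) := by
    intro δ
    have hsub : (cthickening δ Jᶜ)ᶜ ⊆ J :=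
      compl_subset_comm.1 ((subset_closure).trans (closure_subset_cthickening δ _))
    have hfin : IsFiniteMeasure (volume.restrict J) := ⟨by simpa using hJt.lt_top⟩
    have h1 := measure_compl (μ := volume.restrict J)
      (isClosed_cthickening (δ := δ) (E := Jᶜ)).measurableSet (measure_ne_top _ _)
    rw [Measure.restrict_apply isClosed_cthickening.isOpen_compl.measurableSet,
      inter_eq_left.2 hsub, Measure.restrict_apply_univ] at h1
    exact h1
  have h := tendsto_measure_cthickening (μ := volume.restrict J) (s := Jᶜ)
    ⟨1, one_pos, ((measure_mono (subset_univ _)).trans_lt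
      (by simpa using hJt.lt_top)).ne⟩
  have hz : (volume.restrict J) (closure Jᶜ) = 0 := by
    rw [Measure.restrict_apply isClosed_closure.measurableSet]
    refine measure_mono_null ?_ hf
    rintro x ⟨hx, hxJ⟩
    rw [← frontier_compl, frontier_eq_closure_inter_closure, compl_compl]
    exact ⟨hx, subset_closure hxJ⟩
  rw [hz] at h
  have h2 := ENNReal.Tendsto.sub (tendsto_const_nhds (x := volume J)) h (Or.inl hJt)
  rw [tsub_zero] at h2
  simp_rw [hle]
  exact (ENNReal.tendsto_toReal hJt).comp h2

/-! ### Existence of the density -/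

/-- For each tolerance a single constant approximates the density along large dilates of every `J`; it
is the density in one ball whose radius is given by weak almost periodicity. -/
lemma exists_approx_density {n : ℕ} {Γ : Set (Fin n → ℝ)} (hΓ : IsWAP Γ) {ε : ℝ} (hε : 0 < ε) :
    ∃ c : ℝ, ∀ J : Set (Fin n → ℝ), Bornology.IsBounded J → volume (frontier J) = 0 →
      0 < (volume J).toReal → ∃ r₀ > (0:ℝ), ∀ r > r₀, ∀ x : Fin n → ℝ,
        |(((fun y => x + r • y) '' J ∩ Γ).ncard : ℝ) / (r ^ n * (volume J).toReal) - c| < ε := by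
  obtain ⟨R, hR, hc⟩ := hΓ.exists_radius (half_pos hε)
  set c₀ : ℝ := ((ball (0 : Fin n → ℝ) R ∩ Γ).ncard : ℝ)
  set V := volBall n R with hVdef
  have hV : 0 < V := ENNReal.toReal_pos (measure_ball_pos _ _ hR).ne' measure_ball_lt_top.ne
  refine ⟨c₀ / V, fun J hb hf hJ => ?_⟩
  have hlim : Tendsto (fun r : ℝ => R / r) atTop (nhds 0) := tendsto_const_nhds.div_atTop tendsto_id
  have hu : Tendsto (fun r : ℝ => (c₀ / V + ε / 2) * (volume (cthickening (R / r) J)).toReal)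
      atTop (nhds ((c₀ / V + ε / 2) * (volume J).toReal)) :=
    ((tendsto_volume_cthickening hb hf).comp hlim).const_mul _
  have hl : Tendsto (fun r : ℝ => (c₀ / V - ε / 2) * (volume (cthickening (R / r) Jᶜ)ᶜ).toReal)
      atTop (nhds ((c₀ / V - ε / 2) * (volume J).toReal)) :=
    ((tendsto_volume_erosion hb hf).comp hlim).const_mul _
  have hu' := hu.eventually_lt_const
    (show (c₀ / V + ε / 2) * (volume J).toReal < (c₀ / V + ε) * (volume J).toReal by gcongr; linarith)
  have hl' := hl.eventually_const_lt
    (show (c₀ / V - ε) * (volume J).toReal < (c₀ / V - ε / 2) * (volume J).toReal by gcongr; linarith)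
  obtain ⟨r₁, hr₁⟩ := eventually_atTop.1 (hu'.and hl')
  refine ⟨max r₁ 1, by positivity, fun r hr x => ?_⟩
  obtain ⟨h1, h2⟩ := hr₁ r ((le_max_left _ _).trans hr.le)
  have hr0 : 0 < r := zero_lt_one.trans ((le_max_right r₁ 1).trans_lt hr)
  set A := (fun y => x + r • y) '' J with hAdef
  have hAb : Bornology.IsBounded A := isBounded_image_affine r x hb
  have hdist : ∀ y y' : Fin n → ℝ, dist (x + r • y) (x + r • y') = r * dist y y' := by
    intro y y'
    rw [dist_add_left, dist_smul₀, Real.norm_of_nonneg hr0.le]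
  have hsurj : ∀ z : Fin n → ℝ, ∃ y, z = x + r • y := fun z =>
    ⟨r⁻¹ • (z - x), by rw [smul_inv_smul₀ hr0.ne', add_sub_cancel]⟩
  have hUtop : volume ((fun y => x + r • y) '' cthickening (R / r) J) ≠ ⊤ :=
    (isBounded_image_affine r x hb.cthickening).measure_lt_top.ne
  have up := ncard_mul_volBall_le hΓ.1.1 (M := c₀ + ε / 2 * V) (R := R)
    (fun y => by have := (abs_le.1 (hc y)).2; linarith) hAb hUtop (by
      rintro _ ⟨y, hy, rfl⟩ z hz
      obtain ⟨w, rfl⟩ := hsurj z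
      refine ⟨w, mem_cthickening_of_dist_le w y _ _ hy ?_, rfl⟩
      rw [mem_ball, hdist] at hz
      rw [le_div_iff₀ hr0]; linarith)
  have lo := le_ncard_mul_volBall hΓ.1.1 (m := c₀ - ε / 2 * V) (R := R)
    (L := (fun y => x + r • y) '' (cthickening (R / r) Jᶜ)ᶜ)
    (fun y => by have := (abs_le.1 (hc y)).1; linarith) hAb (by
      rintro γ _ ⟨y, hy, rfl⟩ hz
      obtain ⟨w, rfl⟩ := hsurj γ
      refine ⟨w, ?_, rfl⟩
      by_contra hw
      refine hy (mem_cthickening_of_dist_le y w _ _ hw ?_)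
      rw [hdist] at hz
      rw [le_div_iff₀ hr0]; linarith)
  rw [volume_image_affine hr0] at up lo
  have hrn : 0 < r ^ n := pow_pos hr0 n
  set N : ℝ := ((A ∩ Γ).ncard : ℝ)
  set j := (volume J).toReal
  set u := (volume (cthickening (R / r) J)).toReal
  set l := (volume (cthickening (R / r) Jᶜ)ᶜ).toReal
  have up' : N ≤ (c₀ / V + ε / 2) * u * r ^ n := by
    rw [← mul_le_mul_iff_left₀ hV]
    calc N * V ≤ _ := up
      _ = _ := by field_simp
  have lo' : (c₀ / V - ε / 2) * l * r ^ n ≤ N := by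
    rw [← mul_le_mul_iff_left₀ hV]
    calc _ = _ := by field_simp
      _ ≤ N * V := lo
  have up2 : N < (c₀ / V + ε) * j * r ^ n := up'.trans_lt (by gcongr)
  have lo2 : (c₀ / V - ε) * j * r ^ n < N := lt_of_lt_of_le (by gcongr) lo'
  have hrj : 0 < r ^ n * j := mul_pos hrn hJ
  rw [abs_lt]
  constructor
  · have : c₀ / V - ε < N / (r ^ n * j) := by rw [lt_div_iff₀ hrj]; linarith
    linarith
  · have : N / (r ^ n * j) < c₀ / V + ε := by rw [div_lt_iff₀ hrj]; linarith
    linarith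

lemma frontier_ball_null {n : ℕ} (x : Fin n → ℝ) (r : ℝ) : volume (frontier (ball x r)) = 0 :=
  (convex_ball x r).addHaar_frontier volume

/-- The density along dilates of any bounded `J` of positive volume with null boundary exists uniformly
and does not depend on `J`. -/
lemma exists_density {n : ℕ} {Γ : Set (Fin n → ℝ)} (hΓ : IsWAP Γ) :
    ∃ D : ℝ, ∀ J : Set (Fin n → ℝ), Bornology.IsBounded J → volume (frontier J) = 0 →
      0 < (volume J).toReal → ∀ ε > (0:ℝ), ∃ r₀ > (0:ℝ), ∀ r > r₀, ∀ x : Fin n → ℝ,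
        |(((fun y => x + r • y) '' J ∩ Γ).ncard : ℝ) / (r ^ n * (volume J).toReal) - D| < ε := by
  choose! c hc using fun (ε : ℝ) (hε : 0 < ε) => exists_approx_density hΓ hε
  have hcc : ∀ ε > 0, ∀ ε' > 0, |c ε - c ε'| ≤ ε + ε' := by
    intro ε hε ε' hε'
    -- Any single test set compares the two constants; the unit ball will do.
    have hpos : 0 < (volume (ball (0 : Fin n → ℝ) 1)).toReal :=
      ENNReal.toReal_pos (measure_ball_pos _ _ one_pos).ne' measure_ball_lt_top.ne
    obtain ⟨r, _, h⟩ := hc ε hε _ isBounded_ball (frontier_ball_null 0 1) hpos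
    obtain ⟨r', _, h'⟩ := hc ε' hε' _ isBounded_ball (frontier_ball_null 0 1) hpos
    have h1 := abs_lt.1 (h (max r r' + 1) (by linarith [le_max_left r r']) 0)
    have h2 := abs_lt.1 (h' (max r r' + 1) (by linarith [le_max_right r r']) 0)
    rw [abs_le]
    constructor <;> linarith [h1.1, h1.2, h2.1, h2.2]
  have hb : Tendsto (fun k : ℕ => 1 / ((k : ℝ) + 1)) atTop (nhds 0) :=
    tendsto_one_div_add_atTop_nhds_zero_nat
  have hcauchy : CauchySeq fun k : ℕ => c (1 / ((k : ℝ) + 1)) := by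
    refine cauchySeq_of_le_tendsto_0 (fun k : ℕ => 1 / ((k : ℝ) + 1) + 1 / ((k : ℝ) + 1))
      (fun k m N hk hm => ?_) (by simpa using hb.add hb)
    exact (hcc _ (by positivity) _ (by positivity)).trans (by gcongr)
  obtain ⟨D, hD⟩ := cauchySeq_tendsto_of_complete hcauchy
  have hcD : ∀ ε > 0, |c ε - D| ≤ ε := by
    intro ε hε
    have hlim := (tendsto_const_nhds (x := ε)).add hb
    rw [add_zero] at hlim
    exact le_of_tendsto_of_tendsto ((tendsto_const_nhds.sub hD).abs) hlim
      (Eventually.of_forall fun k => hcc _ hε _ (by positivity))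
  refine ⟨D, fun J hJb hJf hJ ε hε => ?_⟩
  obtain ⟨r₀, hr₀, h⟩ := hc (ε / 2) (half_pos hε) J hJb hJf hJ
  refine ⟨r₀, hr₀, fun r hr x => ?_⟩
  have := abs_sub_le (((fun y => x + r • y) '' J ∩ Γ).ncard / (r ^ n * (volume J).toReal))
    (c (ε / 2)) D
  linarith [h r hr x, hcD (ε / 2) (half_pos hε)]

/-! ### Jordan-measurable sets -/

lemma CubeUnion.isBounded {n : ℕ} {C : Set (Fin n → ℝ)} (hC : CubeUnion C) :
    Bornology.IsBounded C := by
  obtain ⟨s, rfl⟩ := hC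
  exact (Bornology.isBounded_biUnion_finset s).2 fun _ _ => isBounded_ball

lemma CubeUnion.isOpen {n : ℕ} {C : Set (Fin n → ℝ)} (hC : CubeUnion C) : IsOpen C := by
  obtain ⟨s, rfl⟩ := hC
  exact isOpen_biUnion fun _ _ => isOpen_ball

/-- The boundary of a finite union of cubes lies in finitely many cube boundaries, so it is null. -/
lemma CubeUnion.volume_closure_diff {n : ℕ} {C : Set (Fin n → ℝ)} (hC : CubeUnion C) :
    volume (closure C \ C) = 0 := by
  obtain ⟨s, rfl⟩ := hC
  rw [s.closure_biUnion]
  refine measure_mono_null (t := ⋃ p ∈ s, frontier (ball p.1 p.2)) ?_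
    ((measure_biUnion_null_iff s.countable_toSet).2 fun p _ => frontier_ball_null _ _)
  rintro x ⟨hx, hx'⟩
  obtain ⟨p, hp, hxp⟩ := mem_iUnion₂.1 hx
  refine mem_iUnion₂.2 ⟨p, hp, hxp, fun hi => hx' (mem_iUnion₂.2 ⟨p, hp, interior_subset hi⟩)⟩

lemma JordanMeas.isBounded {n : ℕ} {J : Set (Fin n → ℝ)} (hJ : JordanMeas J) :
    Bornology.IsBounded J := by
  obtain ⟨C, C', _, hC', _, h, _⟩ := hJ 1 one_pos
  exact hC'.isBounded.subset h

/-- If `J` lies between cube unions, its frontier lies in the closure of the outer one minus the inner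
one, which up to a null set is the difference of the two. -/
lemma JordanMeas.volume_frontier {n : ℕ} {J : Set (Fin n → ℝ)} (hJ : JordanMeas J) :
    volume (frontier J) = 0 := by
  refine le_antisymm (ENNReal.le_of_forall_pos_le_add fun ε hε _ => ?_) zero_le
  obtain ⟨C, C', hC, hC', hCJ, hJC, hlt⟩ := hJ ε hε
  have hsub : frontier J ⊆ (closure C' \ C') ∪ (C' \ C) := by
    rintro x ⟨hx, hx'⟩
    have h1 : x ∉ C := fun h => hx' (interior_maximal hCJ hC.isOpen h)
    by_cases h2 : x ∈ C'
    · exact Or.inr ⟨h2, h1⟩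
    · exact Or.inl ⟨closure_mono hJC hx, h2⟩
  have hfin : volume (C' \ C) ≠ ⊤ := (hC'.isBounded.subset sdiff_subset).measure_lt_top.ne
  calc volume (frontier J) ≤ volume (closure C' \ C') + volume (C' \ C) :=
        (measure_mono hsub).trans (measure_union_le _ _)
    _ = volume (C' \ C) := by rw [hC'.volume_closure_diff, zero_add]
    _ ≤ 0 + ε := by
        rw [zero_add, ← ENNReal.ofReal_toReal hfin, ← ENNReal.ofReal_coe_nnreal]
        exact ENNReal.ofReal_le_ofReal hlt.le

theorem stmt19 {n : ℕ} (Γ : Set (Fin n → ℝ)) (hΓ : IsWAP Γ)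
    (J : Set (Fin n → ℝ)) (hJ : JordanMeas J) (hJ0 : 0 < (volume J).toReal) :
    ∃ DJ : ℝ,
      (∀ ε > (0:ℝ), ∃ Rε > (0:ℝ), ∀ R > Rε, ∀ x : Fin n → ℝ,
        |(((fun y => x + R • y) '' J ∩ Γ).ncard : ℝ) / (volume ((fun y => R • y) '' J)).toReal - DJ| < ε) ∧
      (∀ ε > (0:ℝ), ∃ Rε > (0:ℝ), ∀ R > Rε, ∀ x : Fin n → ℝ,
        |((Γ ∩ Metric.ball x R).ncard : ℝ) / volBall n R - DJ| < ε) := by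
  obtain ⟨D, hD⟩ := exists_density hΓ
  refine ⟨D, fun ε hε => ?_, fun ε hε => ?_⟩
  · obtain ⟨r₀, hr₀, h⟩ := hD J hJ.isBounded hJ.volume_frontier hJ0 ε hε
    refine ⟨r₀, hr₀, fun R hR x => ?_⟩
    have hvol := volume_image_affine (hr₀.trans hR) 0 J
    simp only [zero_add] at hvol
    rw [hvol]
    exact h R hR x
  · have hpos : 0 < (volume (ball (0 : Fin n → ℝ) 1)).toReal :=
      ENNReal.toReal_pos (measure_ball_pos _ _ one_pos).ne' measure_ball_lt_top.ne
    obtain ⟨r₀, hr₀, h⟩ := hD (ball 0 1) isBounded_ball (frontier_ball_null 0 1) hpos ε hε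
    refine ⟨r₀, hr₀, fun R hR x => ?_⟩
    have hR0 : 0 < R := hr₀.trans hR
    have hvol := volume_image_affine hR0 0 (ball (0 : Fin n → ℝ) 1)
    rw [image_affine_unitBall hR0] at hvol
    have := h R hR x
    rwa [image_affine_unitBall hR0, ← hvol, inter_comm] at this
end
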